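/- arXiv:1807.03536 — 2 statements merged into one kernel-verified Lean document; each statement's English description precedes it below -/
import Mathlib

section
/- Let Φ̊ ⊂ ℝⁿ be the root system of type BC_n (n ≥ 2), let (Λ_α) be an extension datum of type (Φ̊, Y) with common values Λ_s, Λ_ℓ, Λ_d on short, long, divisible roots, assume Λ_ℓ is an additive subgroup of Y (automatic for n ≥ 3), and let Φ^re be the associated set of real roots. Then Ψ ⊆ Φ^re is a maximal closed subroot system if and only if one of the following holds: (1) Ψ = Â_J for some subset J ⊊ {1, …, n} (possibly empty), where moreover J ≠ ∅ if Λ_s ≠ Λ_ℓ; (2) there is a maximal closed subroot system Ψ' of Φ^{B_n} whose gradient is a semi-closed subroot system of Φ̊_s ∪ Φ̊_ℓ such that Ψ = Ψ' ∪ {±2εᵢ ⊕ y : 1 ≤ i ≤ n, y ∈ Λ_d}; (3) there is a maximal closed subroot system Ψ' of Φ^{B_n} with Gr(Ψ') = Φ̊_s ∪ Φ̊_ℓ such that Ψ = Ψ' ∪ ⋃_{i=1}^{n} ({2εᵢ ⊕ y : y ∈ (Z_{εᵢ−εᵢ₊₁}(Ψ') + Z_{εᵢ+εᵢ₊₁}(Ψ'))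 ∩ Λ_d} ∪ {−2εᵢ ⊕ y : y ∈ (Z_{−εᵢ+εᵢ₊₁}(Ψ') + Z_{−εᵢ−εᵢ₊₁}(Ψ')) ∩ Λ_d}), where ε_{n+1} := ε₁. -/
open scoped RealInnerProductSpace Pointwise

noncomputable section

namespace BdS

variable {V Y : Type*} [NormedAddCommGroup V] [InnerProductSpace ℝ V]
variable [AddCommGroup Y] [Module ℝ Y]

/-- `pairing β α = (β, α∨) = 2(β,α)/(α,α)`. -/
def pairing (β α : V) : ℝ := 2 * ⟪β, α⟫ / ⟪α, α⟫

/-- `reflRoot α v = s_α(v) = v − (v, α∨)α`. -/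
def reflRoot (α v : V) : V := v - pairing v α • α

/-- A (finite) root system in `V`. -/
def IsRootSystem (Φ : Set V) : Prop :=
  Φ.Finite ∧ (0 : V) ∉ Φ ∧ Submodule.span ℝ Φ = ⊤ ∧
    (∀ α ∈ Φ, ∀ β ∈ Φ, reflRoot α β ∈ Φ) ∧
    ∀ α ∈ Φ, ∀ β ∈ Φ, ∃ m : ℤ, pairing β α = (m : ℝ)

def IsReduced (Φ : Set V) : Prop :=
  ∀ α ∈ Φ, ∀ c : ℝ, c • α ∈ Φ → c • α = α ∨ c • α = -α

def IsIrreducible (Φ : Set V) : Prop :=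
  ∀ Φ₁ Φ₂ : Set V, Φ = Φ₁ ∪ Φ₂ → (∀ x ∈ Φ₁, ∀ y ∈ Φ₂, ⟪x, y⟫ = 0) →
    Φ₁ = ∅ ∨ Φ₂ = ∅

/-- divisible roots -/
def divSet (Φ : Set V) : Set V := {α ∈ Φ | (2:ℝ)⁻¹ • α ∈ Φ}
/-- non-divisible roots -/
def ndSet (Φ : Set V) : Set V := Φ \ divSet Φ
/-- short roots: non-divisible roots of non-maximal squared length -/
def shortSet (Φ : Set V) : Set V := {α ∈ ndSet Φ | ∃ β ∈ ndSet Φ, ⟪α, α⟫ < ⟪β, β⟫}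
/-- long roots -/
def longSet (Φ : Set V) : Set V := ndSet Φ \ shortSet Φ

/-- An extension datum of type `(Φ, Y)`. -/
def IsExtensionDatum (Φ : Set V) (Λ : V → Set Y) : Prop :=
  (∀ α ∈ Φ, ∀ β ∈ Φ, ∀ z ∈ Λ α, ∀ y ∈ Λ β, y - pairing β α • z ∈ Λ (reflRoot α β)) ∧
  (0 : Y) ∈ Λ 0 ∧
  (∀ α ∈ ndSet Φ, (0 : Y) ∈ Λ α) ∧
  (∀ α ∈ divSet Φ, (Λ α).Nonempty) ∧
  Submodule.span ℝ (⋃ α ∈ insert (0 : V) Φ, Λ α) = ⊤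

/-- subroot system of a finite root system -/
def IsSubRS (Φ Δ : Set V) : Prop :=
  Δ.Nonempty ∧ Δ ⊆ Φ ∧ ∀ α ∈ Δ, ∀ β ∈ Δ, reflRoot α β ∈ Δ

def IsClosedSubRS (Φ Δ : Set V) : Prop :=
  IsSubRS Φ Δ ∧ ∀ α ∈ Δ, ∀ β ∈ Δ, α + β ∈ Φ → α + β ∈ Δ

def IsMaxClosedSubRS (Φ Δ : Set V) : Prop :=
  IsClosedSubRS Φ Δ ∧ Δ ≠ Φ ∧
    ∀ Δ' : Set V, IsClosedSubRS Φ Δ' → Δ' ≠ Φ → Δ ⊆ Δ' → Δ' = Δ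

/-- semi-closed subroot system, relative to given short/long/divisible parts -/
def IsSemiClosedSubRS (Φ Φs Φl Φd Δ : Set V) : Prop :=
  IsSubRS Φ Δ ∧ ¬ (∀ α ∈ Δ, ∀ β ∈ Δ, α + β ∈ Φ → α + β ∈ Δ) ∧
    ∀ α ∈ Δ, ∀ β ∈ Δ, α + β ∈ Φ → α + β ∉ Δ →
      (α ∈ Φs ∧ β ∈ Φs ∧ α + β ∈ Φl ∪ Φd) ∨ (α ∈ Φl ∧ β ∈ Φl ∧ α + β ∈ Φd)

def IsMaxSemiClosedSubRS (Φ Φs Φl Φd Δ : Set V) : Prop :=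
  IsSemiClosedSubRS Φ Φs Φl Φd Δ ∧
    ∀ Δ' : Set V, IsClosedSubRS Φ Δ' → Δ' ≠ Φ → ¬ Δ ⊂ Δ'

/-- the set of real roots attached to an extension datum -/
def PhiRe (Φ : Set V) (Λ : V → Set Y) : Set (V × Y) := {x | x.1 ∈ Φ ∧ x.2 ∈ Λ x.1}

/-- affine reflection `s_{α ⊕ y}(β ⊕ z) = s_α(β) ⊕ (z − (β,α∨)y)` -/
def reflAff (a x : V × Y) : V × Y := (reflRoot a.1 x.1, x.2 - pairing x.1 a.1 • a.2)

/-- subroot system of a set of real roots `R` -/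
def IsSubSys (R Ψ : Set (V × Y)) : Prop :=
  Ψ.Nonempty ∧ Ψ ⊆ R ∧ Ψ ≠ R ∧ ∀ a ∈ Ψ, ∀ x ∈ Ψ, reflAff a x ∈ Ψ

def IsClosedSubSys (R Ψ : Set (V × Y)) : Prop :=
  IsSubSys R Ψ ∧ ∀ x ∈ Ψ, ∀ y ∈ Ψ, x + y ∈ R → x + y ∈ Ψ

def IsMaxClosedSubSys (R Ψ : Set (V × Y)) : Prop :=
  IsClosedSubSys R Ψ ∧ ∀ Ψ' : Set (V × Y), IsClosedSubSys R Ψ' → Ψ ⊆ Ψ' → Ψ' = Ψ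

/-- gradient of a subroot system -/
def Gr (Ψ : Set (V × Y)) : Set V := {α | ∃ y : Y, (α, y) ∈ Ψ}

def Zset (Ψ : Set (V × Y)) (α : V) : Set Y := {y | (α, y) ∈ Ψ}

abbrev E (n : ℕ) := EuclideanSpace ℝ (Fin n)

def eps {n : ℕ} (i : Fin n) : E n := EuclideanSpace.single i 1

def shortBC (n : ℕ) : Set (E n) := {v | ∃ i : Fin n, v = eps i ∨ v = -eps i}

def longBC (n : ℕ) : Set (E n) :=
  {v | ∃ i j : Fin n, i ≠ j ∧ ∃ c d : ℝ, (c = 1 ∨ c = -1) ∧ (d = 1 ∨ d = -1) ∧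
    v = c • eps i + d • eps j}

def divBC (n : ℕ) : Set (E n) :=
  {v | ∃ i : Fin n, v = (2:ℝ) • eps i ∨ v = -((2:ℝ) • eps i)}

def BCn (n : ℕ) : Set (E n) := shortBC n ∪ longBC n ∪ divBC n
def Bn (n : ℕ) : Set (E n) := shortBC n ∪ longBC n
def Cn (n : ℕ) : Set (E n) := longBC n ∪ divBC n

/-- the closed subroot system `A_J` of `BC_n`. -/
def AJ (n : ℕ) (J : Set (Fin n)) : Set (E n) :=
  divBC n ∪ {v | ∃ j ∈ J, v = eps j ∨ v = -eps j} ∪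
    {v | ∃ r s : Fin n, r ≠ s ∧ ((r ∈ J ∧ s ∈ J) ∨ (r ∉ J ∧ s ∉ J)) ∧
      ∃ c d : ℝ, (c = 1 ∨ c = -1) ∧ (d = 1 ∨ d = -1) ∧ v = c • eps r + d • eps s}

/-- the cyclic successor `i ↦ i+1` on `Fin n` (with `ε_{n+1} = ε_1`). -/
def nextIdx {n : ℕ} (i : Fin n) : Fin n := ⟨((i : ℕ) + 1) % n, Nat.mod_lt _ i.pos⟩


section Aux

set_option linter.unusedSectionVars false
set_option linter.unusedSimpArgs false

/-! ### Signed indices and the geometry of roots -/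

abbrev X (n : ℕ) := Fin n × Bool

def ng {n : ℕ} (p : X n) : X n := (p.1, !p.2)

@[simp] lemma ng_ng {n : ℕ} (p : X n) : ng (ng p) = p := by simp [ng]

@[simp] lemma ng_fst {n : ℕ} (p : X n) : (ng p).1 = p.1 := rfl

@[simp] lemma ng_ne {n : ℕ} (p : X n) : ng p ≠ p := by
  rcases p with ⟨i, b⟩; cases b <;> simp [ng]

@[simp] lemma ne_ng {n : ℕ} (p : X n) : p ≠ ng p := (ng_ne p).symm

lemma ng_eq {n : ℕ} {p q : X n} : ng p = q ↔ p = ng q := by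
  constructor
  · rintro rfl; simp
  · rintro rfl; simp

@[simp] lemma ng_inj {n : ℕ} {p q : X n} : ng p = ng q ↔ p = q := by
  rw [ng_eq]; simp

lemma fst_eq {n : ℕ} {p q : X n} : p.1 = q.1 ↔ (p = q ∨ p = ng q) := by
  rcases p with ⟨i, b⟩; rcases q with ⟨j, c⟩
  cases b <;> cases c <;> simp [ng]

def ee {n : ℕ} (p : X n) : E n := if p.2 = true then eps p.1 else -eps p.1

lemma ee_ng {n : ℕ} (p : X n) : ee (ng p) = - ee p := by
  rcases p with ⟨i, b⟩; cases b <;> simp [ng, ee]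

def gg {n : ℕ} (p q : X n) : ℝ := if p = q then 1 else if p = ng q then -1 else 0

lemma inner_ee {n : ℕ} (p q : X n) : ⟪ee p, ee q⟫ = gg p q := by
  rcases p with ⟨i, b⟩; rcases q with ⟨j, c⟩
  by_cases h : i = j
  · subst h
    cases b <;> cases c <;> simp [ng, ee, gg, eps, EuclideanSpace.inner_single_left]
  · have h' : j ≠ i := fun k => h k.symm
    cases b <;> cases c <;>
      simp [ng, ee, gg, eps, EuclideanSpace.inner_single_left, h]

@[simp] lemma gg_self {n : ℕ} (p : X n) : gg p p = 1 := by simp [gg]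
@[simp] lemma gg_ng {n : ℕ} (p : X n) : gg p (ng p) = -1 := by simp [gg]
@[simp] lemma gg_ng' {n : ℕ} (p : X n) : gg (ng p) p = -1 := by simp [gg]

lemma gg_zero {n : ℕ} {p q : X n} (h : p ≠ q) (h' : p ≠ ng q) : gg p q = 0 := by simp [gg, h, h']

lemma gg_comm {n : ℕ} (p q : X n) : gg p q = gg q p := by
  rw [← inner_ee, ← inner_ee, real_inner_comm]

lemma gg_nonneg {n : ℕ} {p q : X n} (h : p ≠ ng q) : gg p q = 0 ∨ gg p q = 1 := by
  by_cases h' : p = q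
  · subst h'; simp
  · left; exact gg_zero h' h

lemma gg_le {n : ℕ} {p q : X n} (h : p ≠ q) : gg p q = 0 ∨ gg p q = -1 := by
  by_cases h' : p = ng q
  · subst h'; simp
  · left; exact gg_zero h h'

lemma ee_inj {n : ℕ} {p q : X n} (h : ee p = ee q) : p = q := by
  by_contra hne
  have h1 : ⟪ee p, ee q⟫ = ⟪ee q, ee q⟫ := by rw [h]
  rw [inner_ee, inner_ee, gg_self] at h1
  rcases gg_le hne with h2 | h2 <;> rw [h2] at h1 <;> norm_num at h1

lemma nsq2 {n : ℕ} (p q : X n) : ⟪ee p + ee q, ee p + ee q⟫ = 2 + 2 * gg p q := by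
  simp only [inner_add_left, inner_add_right, inner_ee, gg_self, gg_comm q p]; ring

lemma ee_ne_sum {n : ℕ} {p q r : X n} (h : q ≠ ng p) : ee p + ee q ≠ ee r := by
  intro h0
  have h1 := nsq2 p q
  rw [h0, inner_ee, gg_self, gg_comm] at h1
  rcases gg_nonneg h with h2 | h2 <;> rw [h2] at h1 <;> norm_num at h1

lemma sum_inj {n : ℕ} {p q r s : X n} (h : q ≠ ng p)
    (h0 : ee p + ee q = ee r + ee s) : (p = r ∧ q = s) ∨ (p = s ∧ q = r) := by
  by_cases h1 : r = p
  · subst h1; left; exact ⟨rfl, ee_inj (add_left_cancel h0)⟩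
  by_cases h2 : s = p
  · subst h2; right; rw [add_comm (ee r)] at h0; exact ⟨rfl, ee_inj (add_left_cancel h0)⟩
  exfalso
  have h3 : ⟪ee p + ee q, ee p⟫ = ⟪ee r + ee s, ee p⟫ := by rw [h0]
  simp only [inner_add_left, inner_ee, gg_self] at h3
  rcases gg_nonneg h with a | a <;> rcases gg_le h1 with b | b <;> rcases gg_le h2 with c | c <;>
    rw [a, b, c] at h3 <;> norm_num at h3

/-- the set of roots of type `BC_n` described by signed indices -/
def IsRt {n : ℕ} (v : E n) : Prop := (∃ p, v = ee p) ∨ ∃ p q, q ≠ ng p ∧ v = ee p + ee q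

lemma not_rt_zero {n : ℕ} : ¬ IsRt (0 : E n) := by
  rintro (⟨p, h⟩ | ⟨p, q, h1, h⟩)
  · have := inner_ee p p
    rw [← h] at this; simp at this
  · have := nsq2 p q
    rw [← h, gg_comm] at this
    rcases gg_nonneg h1 with h2 | h2 <;> rw [h2] at this <;> norm_num at this

lemma rt_nsq {n : ℕ} {v : E n} (h : IsRt v) : ⟪v, v⟫ = 1 ∨ ⟪v, v⟫ = 2 ∨ (⟪v, v⟫ = 4 ∧ ∃ p, v = ee p + ee p) := by
  rcases h with ⟨p, rfl⟩ | ⟨p, q, h, rfl⟩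
  · left; rw [inner_ee, gg_self]
  · rw [nsq2]
    by_cases hq : q = p
    · subst hq; right; right; rw [gg_self]; exact ⟨by norm_num, _, rfl⟩
    · right; left; rw [gg_comm, gg_zero hq h]; norm_num

lemma three_rt {n : ℕ} {p q r : X n} (h : q ≠ ng p) (h0 : IsRt (ee p + ee q + ee r)) :
    r = ng p ∨ r = ng q := by
  by_contra hc
  push Not at hc
  have h1 : ⟪ee p + ee q + ee r, ee p + ee q + ee r⟫ = 3 + 2 * (gg q p + gg r p + gg r q) := by
    simp only [inner_add_left, inner_add_right, inner_ee, gg_self, gg_comm p q, gg_comm p r,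
      gg_comm q r]; ring
  have h2 := rt_nsq h0
  rw [h1] at h2
  rcases gg_nonneg h with a | a <;> rcases gg_nonneg hc.1 with b | b <;>
    rcases gg_nonneg hc.2 with c | c <;> rw [a, b, c] at h2 <;> norm_num at h2

lemma four_rt {n : ℕ} {p q r s : X n} (h : q ≠ ng p) (h' : s ≠ ng r)
    (h0 : IsRt (ee p + ee q + (ee r + ee s))) :
    r = ng p ∨ r = ng q ∨ s = ng p ∨ s = ng q := by
  by_contra hc
  push Not at hc
  obtain ⟨c1, c2, c3, c4⟩ := hc
  have h1 : ⟪ee p + ee q + (ee r + ee s), ee p + ee q + (ee r + ee s)⟫ =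
      4 + 2 * (gg q p + gg s r + gg r p + gg r q + gg s p + gg s q) := by
    simp only [inner_add_left, inner_add_right, inner_ee, gg_self, gg_comm p q, gg_comm p r,
      gg_comm q r, gg_comm p s, gg_comm q s, gg_comm r s]; ring
  have h2 := rt_nsq h0
  rw [h1] at h2
  have n1 : 0 ≤ gg q p := by rcases gg_nonneg h with a | a <;> rw [a]; norm_num
  have n2 : 0 ≤ gg s r := by rcases gg_nonneg h' with a | a <;> rw [a]; norm_num
  have n3 : 0 ≤ gg r p := by rcases gg_nonneg c1 with a | a <;> rw [a]; norm_num
  have n4 : 0 ≤ gg r q := by rcases gg_nonneg c2 with a | a <;> rw [a]; norm_num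
  have n5 : 0 ≤ gg s p := by rcases gg_nonneg c3 with a | a <;> rw [a]; norm_num
  have n6 : 0 ≤ gg s q := by rcases gg_nonneg c4 with a | a <;> rw [a]; norm_num
  rcases h2 with h2 | h2 | ⟨h2, t, ht⟩
  · linarith
  · linarith
  · have h3 : ⟪ee p + ee q + (ee r + ee s), ee p⟫ = ⟪ee t + ee t, ee p⟫ := by rw [ht]
    simp only [inner_add_left, inner_ee, gg_self] at h3
    have e1 : gg q p = 0 := by linarith
    have e2 : gg r p = 0 := by linarith
    have e3 : gg s p = 0 := by linarith
    rw [e1, e2, e3] at h3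
    by_cases ht' : t = ng p
    · subst ht'; simp at h3; norm_num at h3
    · rcases gg_nonneg ht' with a | a <;> rw [a] at h3 <;> norm_num at h3

/-! ### Pairings and reflections -/

lemma pairing_add_left {n : ℕ} (a b α : E n) : pairing (a + b) α = pairing a α + pairing b α := by
  simp only [pairing, inner_add_left]; ring

lemma pairing_neg_right {n : ℕ} (a α : E n) : pairing a (-α) = - pairing a α := by
  simp only [pairing, inner_neg_right, inner_neg_left, neg_neg]; ring

lemma pairing_s {n : ℕ} (r p : X n) : pairing (ee r) (ee p) = 2 * gg r p := by
  rw [pairing, inner_ee, inner_ee, gg_self, div_one]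

lemma pairing_l {n : ℕ} (r p q : X n) :
    pairing (ee r) (ee p + ee q) = 2 * (gg r p + gg r q) / (2 + 2 * gg p q) := by
  rw [pairing, nsq2, inner_add_right, inner_ee, inner_ee]

lemma pairing_l_one {n : ℕ} {p q : X n} (h : q ≠ ng p) :
    pairing (ee p) (ee p + ee q) = 1 := by
  rw [pairing_l, gg_self, gg_comm]
  rcases gg_nonneg h with a | a <;> rw [a] <;> norm_num

lemma pairing_l_zero {n : ℕ} {p q r : X n} (h1 : r ≠ p) (h2 : r ≠ q) (h3 : r ≠ ng p)
    (h4 : r ≠ ng q) : pairing (ee r) (ee p + ee q) = 0 := by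
  rw [pairing_l, gg_zero h1 h3, gg_zero h2 h4]; norm_num

lemma reflAff_neg {n : ℕ} (a x : E n × Y) : reflAff (-a) x = reflAff a x := by
  ext1
  · simp [reflAff, reflRoot, pairing_neg_right]
  · simp [reflAff, pairing_neg_right]


/-! ### Combinatorial description of sets of real roots -/

def mkR {n : ℕ} (S : X n → Set Y) (L : X n → X n → Set Y) : Set (E n × Y) :=
  {x | (∃ p, x.1 = ee p ∧ x.2 ∈ S p) ∨ ∃ p q, q ≠ ng p ∧ x.1 = ee p + ee q ∧ x.2 ∈ L p q}

lemma mem_mk_s {n : ℕ} {S : X n → Set Y} {L : X n → X n → Set Y} {p : X n} {y : Y} :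
    (ee p, y) ∈ mkR S L ↔ y ∈ S p := by
  constructor
  · rintro (⟨q, h, hy⟩ | ⟨q, r, hq, h, hy⟩)
    · have := ee_inj h; subst this; exact hy
    · exact absurd h.symm (ee_ne_sum hq)
  · intro h; exact Or.inl ⟨p, rfl, h⟩

lemma mem_mk_l {n : ℕ} {S : X n → Set Y} {L : X n → X n → Set Y}
    (hL : ∀ p q y, y ∈ L p q → y ∈ L q p) {p q : X n} (hpq : q ≠ ng p) {y : Y} :
    (ee p + ee q, y) ∈ mkR S L ↔ y ∈ L p q := by
  constructor
  · rintro (⟨r, h, hy⟩ | ⟨r, s, hq, h, hy⟩)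
    · exact absurd h (ee_ne_sum hpq)
    · rcases sum_inj hpq h with ⟨rfl, rfl⟩ | ⟨rfl, rfl⟩
      · exact hy
      · exact hL _ _ _ hy
  · intro h; exact Or.inr ⟨p, q, hpq, rfl, h⟩

def KK {n : ℕ} (T : Set Y) (Λl : AddSubgroup Y) (p q : X n) : Set Y :=
  {y | y ∈ Λl ∧ (p = q → y ∈ T)}

lemma KK_symm {n : ℕ} {T : Set Y} {Λl : AddSubgroup Y} (p q : X n) (y : Y)
    (h : y ∈ KK T Λl p q) : y ∈ KK T Λl q p := ⟨h.1, fun k => h.2 k.symm⟩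

def RR (n : ℕ) (Λs T : Set Y) (Λl : AddSubgroup Y) : Set (E n × Y) := mkR (fun _ => Λs) (KK T Λl)

structure Dat (Λs T : Set Y) (Λl : AddSubgroup Y) : Prop where
  ls : ∀ y ∈ Λl, y ∈ Λs
  add : ∀ y ∈ Λs, ∀ l ∈ Λl, y + l ∈ Λs
  two : ∀ y ∈ Λs, y + y ∈ Λl
  tl : ∀ d ∈ T, d ∈ Λl
  t2 : ∀ d ∈ T, ∀ l ∈ Λl, d - (l + l) ∈ T

lemma Dat.tneg {Λs T : Set Y} {Λl : AddSubgroup Y} (D : Dat Λs T Λl) {d : Y} (h : d ∈ T) :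
    -d ∈ T := by
  have := D.t2 d h d (D.tl d h)
  rwa [show d - (d + d) = -d by abel] at this

lemma Dat.sneg {Λs T : Set Y} {Λl : AddSubgroup Y} (D : Dat Λs T Λl) {d : Y} (h : d ∈ Λs) :
    -d ∈ Λs := by
  have := D.add d h _ (Λl.neg_mem (D.two d h))
  rwa [show d + -(d + d) = -d by abel] at this

lemma Dat.empty {Λs T : Set Y} {Λl : AddSubgroup Y} (D : Dat Λs T Λl) : Dat Λs ∅ Λl :=
  ⟨D.ls, D.add, D.two, by simp, by simp⟩

lemma RR_rt {n : ℕ} {Λs T : Set Y} {Λl : AddSubgroup Y} {x : E n × Y} (h : x ∈ RR n Λs T Λl) :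
    IsRt x.1 := by
  rcases h with ⟨p, h, -⟩ | ⟨p, q, hq, h, -⟩
  · exact Or.inl ⟨p, h⟩
  · exact Or.inr ⟨p, q, hq, h⟩

lemma mem_RR_s {n : ℕ} {Λs T : Set Y} {Λl : AddSubgroup Y} {p : X n} {y : Y} :
    (ee p, y) ∈ RR n Λs T Λl ↔ y ∈ Λs := mem_mk_s

lemma mem_RR_l {n : ℕ} {Λs T : Set Y} {Λl : AddSubgroup Y} {p q : X n} (h : q ≠ ng p) {y : Y} :
    (ee p + ee q, y) ∈ RR n Λs T Λl ↔ y ∈ Λl ∧ (p = q → y ∈ T) :=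
  mem_mk_l KK_symm h

/-- criterion for `mkR S L` to be closed -/
structure Cr {n : ℕ} (Λs T : Set Y) (Λl : AddSubgroup Y) (S : X n → Set Y)
    (L : X n → X n → Set Y) : Prop where
  symm : ∀ p q y, y ∈ L p q → y ∈ L q p
  subS : ∀ p y, y ∈ S p → y ∈ Λs
  subL : ∀ p q y, q ≠ ng p → y ∈ L p q → y ∈ Λl ∧ (p = q → y ∈ T)
  negS : ∀ p y, y ∈ S p → -y ∈ S (ng p)
  negL : ∀ p q y, q ≠ ng p → y ∈ L p q → -y ∈ L (ng p) (ng q)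
  rS : ∀ p y z, y ∈ S p → z ∈ S p → y - (z + z) ∈ S (ng p)
  rL : ∀ p q y z, q ≠ ng p → y ∈ L p q → z ∈ L p q → y - (z + z) ∈ L (ng p) (ng q)
  rD : ∀ p d y, d ∈ L p p → y ∈ S p → d - ((y + y) + (y + y)) ∈ L (ng p) (ng p)
  ss : ∀ p q y z, q ≠ ng p → y ∈ S p → z ∈ S q → y + z ∈ Λl → (p = q → y + z ∈ T) →
    y + z ∈ L p q
  ls : ∀ p q y z, q ≠ ng p → y ∈ L p q → z ∈ S (ng q) → y + z ∈ S p
  ll : ∀ p q r y z, q ≠ ng p → r ≠ q → r ≠ ng p → y ∈ L p q → z ∈ L (ng q) r → y + z ∈ Λl →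
    (p = r → y + z ∈ T) → y + z ∈ L p r

variable {n : ℕ} {Λs T : Set Y} {Λl : AddSubgroup Y}

lemma Cr.sub {S : X n → Set Y} {L : X n → X n → Set Y} (C : Cr Λs T Λl S L) :
    mkR S L ⊆ RR n Λs T Λl := by
  rintro x (⟨p, h, hy⟩ | ⟨p, q, hq, h, hy⟩)
  · exact Or.inl ⟨p, h, C.subS _ _ hy⟩
  · exact Or.inr ⟨p, q, hq, h, C.subL _ _ _ hq hy⟩

lemma Cr.add {S : X n → Set Y} {L : X n → X n → Set Y} (C : Cr Λs T Λl S L)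
    (x : E n × Y) (hx : x ∈ mkR S L) (y : E n × Y) (hy : y ∈ mkR S L)
    (hxy : x + y ∈ RR n Λs T Λl) : x + y ∈ mkR S L := by
  have hSL : ∀ p q r y z, q ≠ ng p → y ∈ L p q → z ∈ S r →
      (ee p + ee q + ee r, y + z) ∈ RR n Λs T Λl → (ee p + ee q + ee r, y + z) ∈ mkR S L := by
    intro p q r y z hq hy hz hR
    rcases three_rt hq (RR_rt hR) with rfl | rfl
    · have e : ee p + ee q + ee (ng p) = ee q := by rw [ee_ng]; abel
      rw [e, mem_mk_s]
      exact C.ls q p y z (fun h => hq (by rw [h]; simp)) (C.symm _ _ _ hy) hz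
    · have e : ee p + ee q + ee (ng q) = ee p := by rw [ee_ng]; abel
      rw [e, mem_mk_s]
      exact C.ls p q y z hq hy hz
  have hLL1 : ∀ p q r y z, q ≠ ng p → r ≠ q → y ∈ L p q → z ∈ L (ng q) r →
      (ee p + ee q + (ee (ng q) + ee r), y + z) ∈ RR n Λs T Λl →
      (ee p + ee q + (ee (ng q) + ee r), y + z) ∈ mkR S L := by
    intro p q r y z hq hs hy hz hR
    have e : ee p + ee q + (ee (ng q) + ee r) = ee p + ee r := by rw [ee_ng]; abel
    rw [e] at hR ⊢
    have hrp : r ≠ ng p := by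
      rintro rfl
      have := RR_rt hR
      simp only [ee_ng, add_neg_cancel] at this
      exact not_rt_zero this
    rw [mem_RR_l hrp] at hR
    rw [mem_mk_l C.symm hrp]
    exact C.ll _ _ _ _ _ hq hs hrp hy hz hR.1 hR.2
  have hLL : ∀ p q r s y z, q ≠ ng p → s ≠ ng r → y ∈ L p q → z ∈ L r s →
      (ee p + ee q + (ee r + ee s), y + z) ∈ RR n Λs T Λl →
      (ee p + ee q + (ee r + ee s), y + z) ∈ mkR S L := by
    intro p q r s y z hq hs hy hz hR
    have hq' : p ≠ ng q := fun h => hq (by rw [h]; simp)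
    have hs' : r ≠ ng s := fun h => hs (by rw [h]; simp)
    rcases four_rt hq hs (RR_rt hR) with rfl | rfl | rfl | rfl
    · have := hLL1 q p s y z hq' (by simpa using hs) (C.symm _ _ _ hy) hz
      rw [add_comm (ee q)] at this
      exact this hR
    · exact hLL1 p q s y z hq (by simpa using hs) hy hz hR
    · have := hLL1 q p r y z hq' (by simpa using hs') (C.symm _ _ _ hy) (C.symm _ _ _ hz)
      rw [add_comm (ee q), add_comm _ (ee r)] at this
      exact this hR
    · have := hLL1 p q r y z hq (by simpa using hs') hy (C.symm _ _ _ hz)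
      rw [add_comm _ (ee r)] at this
      exact this hR
  obtain ⟨x1, x2⟩ := x
  obtain ⟨y1, y2⟩ := y
  simp only [Prod.mk_add_mk] at hxy ⊢
  rcases hx with ⟨p, h, hp⟩ | ⟨p, q, hq, h, hp⟩ <;> rcases hy with ⟨r, h', hr⟩ | ⟨r, s, hs, h', hr⟩ <;>
    simp only at h h' hp hr <;> subst h <;> subst h'
  · have hrp : r ≠ ng p := by
      rintro rfl
      have := RR_rt hxy
      simp only [ee_ng, add_neg_cancel] at this
      exact not_rt_zero this
    rw [mem_RR_l hrp] at hxy
    rw [mem_mk_l C.symm hrp]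
    exact C.ss _ _ _ _ hrp hp hr hxy.1 hxy.2
  · rw [add_comm (ee p), add_comm x2] at hxy ⊢
    exact hSL _ _ _ _ _ hs hr hp hxy
  · exact hSL _ _ _ _ _ hq hp hr hxy
  · exact hLL _ _ _ _ _ _ hq hs hp hr hxy

lemma Cr.neg {S : X n → Set Y} {L : X n → X n → Set Y} (C : Cr Λs T Λl S L)
    {x : E n × Y} (hx : x ∈ mkR S L) : -x ∈ mkR S L := by
  obtain ⟨x1, x2⟩ := x
  rcases hx with ⟨p, h, hp⟩ | ⟨p, q, hq, h, hp⟩ <;> simp only at h hp <;> subst h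
  · rw [Prod.neg_mk, ← ee_ng, mem_mk_s]; exact C.negS _ _ hp
  · rw [Prod.neg_mk, neg_add, ← ee_ng, ← ee_ng, mem_mk_l C.symm (by simpa [ng_eq] using hq)]
    exact C.negL _ _ _ hq hp

lemma refl_eq {a b : E n} {x y : Y} {c : ℝ} (h : pairing b a = c) :
    reflAff (a, x) (b, y) = (b - c • a, y - c • x) := by
  simp [reflAff, reflRoot, h]

lemma Cr.refl {S : X n → Set Y} {L : X n → X n → Set Y} (D : Dat Λs T Λl) (C : Cr Λs T Λl S L)
    (a : E n × Y) (ha : a ∈ mkR S L) (x : E n × Y) (hx : x ∈ mkR S L) : reflAff a x ∈ mkR S L := by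
  -- pairing with a short root, short
  have kss : ∀ p y z, y ∈ S p → z ∈ S p → reflAff (ee p, y) (ee p, z) ∈ mkR S L := by
    intro p y z hy hz
    rw [refl_eq (c := 2) (by rw [pairing_s]; simp)]
    rw [show ee p - (2:ℝ) • ee p = ee (ng p) by rw [ee_ng]; module,
      show z - (2:ℝ) • y = z - (y + y) by module, mem_mk_s]
    exact C.rS _ _ _ hz hy
  have kss' : ∀ p q y z, y ∈ S p → z ∈ S q → reflAff (ee p, y) (ee q, z) ∈ mkR S L := by
    intro p q y z hy hz
    by_cases h1 : q = p
    · subst h1; exact kss _ _ _ hy hz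
    by_cases h2 : q = ng p
    · subst h2
      have := kss _ _ _ (C.negS _ _ hy) hz
      rw [ee_ng, ← Prod.neg_mk, reflAff_neg, ← ee_ng] at this
      exact this
    · rw [refl_eq (c := 0) (by rw [pairing_s, gg_zero h1 h2]; simp)]
      simpa using mem_mk_s.2 hz
  have ksl : ∀ p s y z, s ≠ ng p → y ∈ S p → z ∈ L p s →
      reflAff (ee p, y) (ee p + ee s, z) ∈ mkR S L := by
    intro p s y z hs hy hz
    by_cases h1 : s = p
    · subst h1
      rw [refl_eq (c := 4) (by rw [pairing_add_left, pairing_s]; simp; norm_num)]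
      rw [show ee s + ee s - (4:ℝ) • ee s = ee (ng s) + ee (ng s) by rw [ee_ng]; module,
        show z - (4:ℝ) • y = z - ((y + y) + (y + y)) by module, mem_mk_l C.symm (by simp)]
      exact C.rD _ _ _ hz hy
    · rw [refl_eq (c := 2)
        (by rw [pairing_add_left, pairing_s, pairing_s, gg_zero h1 hs]; simp)]
      rw [show ee p + ee s - (2:ℝ) • ee p = ee (ng p) + ee s by rw [ee_ng]; module,
        show z - (2:ℝ) • y = -y + (z + -y) by module, mem_mk_l C.symm (by simpa using h1)]
      have h2 : z + -y ∈ S s :=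
        C.ls _ _ _ _ (fun h => hs (by rw [h]; simp)) (C.symm _ _ _ hz) (C.negS _ _ hy)
      refine C.ss _ _ _ _ (by simpa using h1) (C.negS _ _ hy) h2 ?_ (fun h => absurd h.symm hs)
      have := Λl.sub_mem (C.subL _ _ _ hs hz).1 (D.two _ (C.subS _ _ hy))
      rwa [show -y + (z + -y) = z - (y + y) by abel]
  have ksl' : ∀ p r s y z, s ≠ ng r → (r = p ∨ r = ng p) → y ∈ S p → z ∈ L r s →
      reflAff (ee p, y) (ee r + ee s, z) ∈ mkR S L := by
    rintro p r s y z hs (rfl | rfl) hy hz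
    · exact ksl _ _ _ _ hs hy hz
    · have := ksl _ _ _ _ hs (C.negS _ _ hy) hz
      nth_rewrite 1 [ee_ng] at this
      rwa [← Prod.neg_mk, reflAff_neg] at this
  -- long or divisible reflecting roots
  have kls : ∀ p q y z, q ≠ ng p → y ∈ L p q → z ∈ S p →
      reflAff (ee p + ee q, y) (ee p, z) ∈ mkR S L := by
    intro p q y z hq hy hz
    rw [refl_eq (c := 1) (pairing_l_one hq)]
    rw [show ee p - (1:ℝ) • (ee p + ee q) = ee (ng q) by rw [ee_ng]; module,
      show z - (1:ℝ) • y = -y + z by module, mem_mk_s]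
    exact C.ls _ (ng p) _ _ (by simpa using fun h => hq (by rw [h]))
      (C.symm _ _ _ (C.negL _ _ _ hq hy)) (by simpa using hz)
  have kll : ∀ p q s y z, q ≠ ng p → s ≠ ng p → y ∈ L p q → z ∈ L p s →
      reflAff (ee p + ee q, y) (ee p + ee s, z) ∈ mkR S L := by
    intro p q s y z hq hs hy hz
    have hq' : p ≠ ng q := fun h => hq (by rw [h]; simp)
    have hs' : p ≠ ng s := fun h => hs (by rw [h]; simp)
    have hy' := C.negL _ _ _ hq hy
    by_cases h1 : s = q
    · subst h1
      rw [refl_eq (c := 2) (by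
        have := pairing_l_one hq'
        rw [add_comm] at this
        rw [pairing_add_left, pairing_l_one hq, this]; norm_num)]
      rw [show ee p + ee s - (2:ℝ) • (ee p + ee s) = ee (ng p) + ee (ng s) by
          rw [ee_ng, ee_ng]; module,
        show z - (2:ℝ) • y = z - (y + y) by module, mem_mk_l C.symm (by simpa [ng_eq] using hq)]
      exact C.rL _ _ _ _ hq hz hy
    by_cases h2 : s = p
    · subst h2
      rw [refl_eq (c := 2) (by rw [pairing_add_left, pairing_l_one hq]; norm_num)]
      rw [show ee s + ee s - (2:ℝ) • (ee s + ee q) = ee (ng q) + ee (ng q) by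
          rw [ee_ng]; module,
        show z - (2:ℝ) • y = (z + -y) + -y by module, mem_mk_l C.symm (by simp)]
      have hzl := (C.subL _ _ _ hs hz)
      have hyl := (C.subL _ _ _ hq hy)
      have h3 : z + -y ∈ L s (ng q) :=
        C.ll _ s _ _ _ hs (by simpa using fun h => hq' h.symm)
          (by simpa using fun h => h1 h.symm) hz hy'
          (Λl.add_mem hzl.1 (Λl.neg_mem hyl.1)) (fun h => absurd h hq')
      refine C.ll _ s _ _ _ (by simpa using h1) (fun h => hq' h.symm) (by simp)
        (C.symm _ _ _ h3) hy' ?_ ?_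
      · exact Λl.add_mem (Λl.add_mem hzl.1 (Λl.neg_mem hyl.1)) (Λl.neg_mem hyl.1)
      · intro _
        have := D.t2 _ (hzl.2 rfl) _ hyl.1
        rwa [show z + -y + -y = z - (y + y) by abel]
    by_cases h3 : s = ng q
    · subst h3
      have e : pairing (ee (ng q)) (ee p + ee q) = -1 := by
        have hpq : p ≠ q := fun h => hs (by rw [h])
        rw [pairing_l, gg_zero (p := ng q) (q := p) h2 (by simpa using fun h => hpq h.symm),
          gg_ng', gg_zero hpq hq']
        norm_num
      rw [refl_eq (c := 0) (by rw [pairing_add_left, pairing_l_one hq, e]; norm_num)]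
      simpa using (mem_mk_l C.symm hs).2 hz
    · rw [refl_eq (c := 1) (by
        rw [pairing_add_left, pairing_l_one hq, pairing_l_zero h2 h1 hs h3]; norm_num)]
      rw [show ee p + ee s - (1:ℝ) • (ee p + ee q) = ee s + ee (ng q) by rw [ee_ng]; module,
        show z - (1:ℝ) • y = z + -y by module,
        mem_mk_l C.symm (by simpa using fun h => h1 h.symm)]
      refine C.ll _ p _ _ _ hs' (fun h => hq' h.symm) (by simpa using fun h => h1 h.symm)
        (C.symm _ _ _ hz) hy' ?_ (fun h => absurd h h3)
      exact Λl.add_mem (C.subL _ _ _ hs hz).1 (Λl.neg_mem (C.subL _ _ _ hq hy).1)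
  -- bring a common index to the front
  have front : ∀ p q r y, q ≠ ng p → y ∈ L p q →
      (r = p ∨ r = q ∨ r = ng p ∨ r = ng q) → ∃ u v, u ≠ ng r ∧ v ∈ L r u ∧
        ∀ x, reflAff (ee p + ee q, y) x = reflAff (ee r + ee u, v) x := by
    rintro p q r y hq hy (rfl | rfl | rfl | rfl)
    · exact ⟨q, y, hq, hy, fun x => rfl⟩
    · exact ⟨p, y, fun h => hq (by rw [h]; simp), C.symm _ _ _ hy, fun x => by rw [add_comm]⟩
    · refine ⟨ng q, -y, by simpa [ng_eq] using hq, C.negL _ _ _ hq hy, fun x => ?_⟩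
      rw [ee_ng, ee_ng, ← neg_add, ← Prod.neg_mk, reflAff_neg]
    · refine ⟨ng p, -y, by simpa using fun h => hq (by rw [h]),
        C.symm _ _ _ (C.negL _ _ _ hq hy), fun x => ?_⟩
      rw [ee_ng, ee_ng, ← neg_add, ← Prod.neg_mk, reflAff_neg, add_comm]
  obtain ⟨x1, x2⟩ := x
  obtain ⟨a1, a2⟩ := a
  rcases ha with ⟨p, h, hp⟩ | ⟨p, q, hq, h, hp⟩ <;> rcases hx with ⟨r, h', hr⟩ | ⟨r, s, hs, h', hr⟩ <;>
    simp only at h h' hp hr <;> subst h <;> subst h'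
  · exact kss' _ _ _ _ hp hr
  · by_cases h1 : r = p ∨ r = ng p
    · exact ksl' _ _ _ _ _ hs h1 hp hr
    by_cases h2 : s = p ∨ s = ng p
    · rw [add_comm]
      exact ksl' _ _ _ _ _ (fun h => hs (by rw [h]; simp)) h2 hp (C.symm _ _ _ hr)
    · push Not at h1 h2
      rw [refl_eq (c := 0) (by
        rw [pairing_add_left, pairing_s, pairing_s, gg_zero h1.1 h1.2, gg_zero h2.1 h2.2]; simp)]
      simpa using (mem_mk_l C.symm hs).2 hr
  · by_cases h1 : r = p ∨ r = q ∨ r = ng p ∨ r = ng q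
    · obtain ⟨u, v, hu, hv, he⟩ := front _ _ _ _ hq hp h1
      rw [he]; exact kls _ _ _ _ hu hv hr
    · push Not at h1
      rw [refl_eq (c := 0) (pairing_l_zero h1.1 h1.2.1 h1.2.2.1 h1.2.2.2)]
      simpa using mem_mk_s.2 hr
  · by_cases h1 : r = p ∨ r = q ∨ r = ng p ∨ r = ng q
    · obtain ⟨u, v, hu, hv, he⟩ := front _ _ _ _ hq hp h1
      rw [he]; exact kll _ _ _ _ _ hu hs hv hr
    by_cases h2 : s = p ∨ s = q ∨ s = ng p ∨ s = ng q
    · obtain ⟨u, v, hu, hv, he⟩ := front _ _ _ _ hq hp h2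
      rw [he, add_comm (ee r)]
      exact kll _ _ _ _ _ hu (fun h => hs (by rw [h]; simp)) hv (C.symm _ _ _ hr)
    · push Not at h1 h2
      rw [refl_eq (c := 0) (by
        rw [pairing_add_left, pairing_l_zero h1.1 h1.2.1 h1.2.2.1 h1.2.2.2,
          pairing_l_zero h2.1 h2.2.1 h2.2.2.1 h2.2.2.2]; simp)]
      simpa using (mem_mk_l C.symm hs).2 hr

lemma Cr.closed {S : X n → Set Y} {L : X n → X n → Set Y} (D : Dat Λs T Λl)
    (C : Cr Λs T Λl S L) (h1 : (mkR S L).Nonempty) (h2 : mkR S L ≠ RR n Λs T Λl) :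
    IsClosedSubSys (RR n Λs T Λl) (mkR S L) :=
  ⟨⟨h1, C.sub, h2, C.refl D⟩, C.add⟩

/-! ### Consequences of closedness -/

structure Cl (n : ℕ) (Λs T : Set Y) (Λl : AddSubgroup Y) (Ψ : Set (E n × Y)) : Prop where
  sub : Ψ ⊆ RR n Λs T Λl
  neg : ∀ x ∈ Ψ, -x ∈ Ψ
  refl : ∀ a ∈ Ψ, ∀ x ∈ Ψ, reflAff a x ∈ Ψ
  add : ∀ x ∈ Ψ, ∀ y ∈ Ψ, x + y ∈ RR n Λs T Λl → x + y ∈ Ψ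

lemma pairing_rt {v : E n} (h : IsRt v) : pairing v v = 2 := by
  have : ⟪v, v⟫ ≠ 0 := by
    intro h0
    rw [inner_self_eq_zero] at h0
    subst h0; exact not_rt_zero h
  rw [pairing]; field_simp

lemma cl_of {Ψ : Set (E n × Y)} (h : IsClosedSubSys (RR n Λs T Λl) Ψ) : Cl n Λs T Λl Ψ := by
  refine ⟨h.1.2.1, ?_, h.1.2.2.2, h.2⟩
  intro x hx
  have h1 := h.1.2.2.2 x hx x hx
  have h2 := pairing_rt (RR_rt (h.1.2.1 hx))
  obtain ⟨x1, x2⟩ := x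
  rw [refl_eq h2] at h1
  convert h1 using 1
  rw [Prod.neg_mk]
  congr 1 <;> module



lemma Cl.s_mem {Ψ : Set (E n × Y)} (C : Cl n Λs T Λl Ψ) {p : X n} {y : Y} (h : (ee p, y) ∈ Ψ) :
    y ∈ Λs := mem_RR_s.1 (C.sub h)

lemma Cl.l_mem {Ψ : Set (E n × Y)} (C : Cl n Λs T Λl Ψ) {p q : X n} {y : Y} (hq : q ≠ ng p)
    (h : (ee p + ee q, y) ∈ Ψ) : y ∈ Λl ∧ (p = q → y ∈ T) := (mem_RR_l hq).1 (C.sub h)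

lemma Cl.negS {Ψ : Set (E n × Y)} (C : Cl n Λs T Λl Ψ) {p : X n} {y : Y} (h : (ee p, y) ∈ Ψ) :
    (ee (ng p), -y) ∈ Ψ := by
  have := C.neg _ h
  rwa [Prod.neg_mk, ← ee_ng] at this

lemma Cl.negL {Ψ : Set (E n × Y)} (C : Cl n Λs T Λl Ψ) {p q : X n} {y : Y}
    (h : (ee p + ee q, y) ∈ Ψ) : (ee (ng p) + ee (ng q), -y) ∈ Ψ := by
  have := C.neg _ h
  rwa [Prod.neg_mk, neg_add, ← ee_ng, ← ee_ng] at this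

lemma Cl.ss {Ψ : Set (E n × Y)} (C : Cl n Λs T Λl Ψ) {p q : X n} {y z : Y} (hq : q ≠ ng p)
    (h1 : (ee p, y) ∈ Ψ) (h2 : (ee q, z) ∈ Ψ) (h3 : y + z ∈ Λl) (h4 : p = q → y + z ∈ T) :
    (ee p + ee q, y + z) ∈ Ψ :=
  C.add _ h1 _ h2 ((mem_RR_l hq).2 ⟨h3, h4⟩)

lemma Cl.ls {Ψ : Set (E n × Y)} (D : Dat Λs T Λl) (C : Cl n Λs T Λl Ψ) {p q : X n} {y z : Y}
    (hq : q ≠ ng p) (h1 : (ee p + ee q, y) ∈ Ψ) (h2 : (ee (ng q), z) ∈ Ψ) :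
    (ee p, y + z) ∈ Ψ := by
  have e : ee p + ee q + ee (ng q) = ee p := by rw [ee_ng]; abel
  have := C.add _ h1 _ h2
  rw [Prod.mk_add_mk, e] at this
  apply this
  rw [mem_RR_s, add_comm]
  exact D.add _ (C.s_mem h2) _ (C.l_mem hq h1).1

lemma Cl.ls' {Ψ : Set (E n × Y)} (D : Dat Λs T Λl) (C : Cl n Λs T Λl Ψ) {p q : X n} {y z : Y}
    (hq : q ≠ p) (h1 : (ee p + ee (ng q), y) ∈ Ψ) (h2 : (ee q, z) ∈ Ψ) :
    (ee p, y + z) ∈ Ψ :=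
  C.ls D (q := ng q) (by simpa using hq) h1 (by simpa using h2)

lemma Cl.ll {Ψ : Set (E n × Y)} (C : Cl n Λs T Λl Ψ) {p q r : X n} {y z : Y}
    (h1 : (ee p + ee q, y) ∈ Ψ) (h2 : (ee (ng q) + ee r, z) ∈ Ψ) (hq : q ≠ ng p) (hr : r ≠ q)
    (hrp : r ≠ ng p) (h4 : p = r → y + z ∈ T) : (ee p + ee r, y + z) ∈ Ψ := by
  have e : ee p + ee q + (ee (ng q) + ee r) = ee p + ee r := by rw [ee_ng]; abel
  have := C.add _ h1 _ h2
  rw [Prod.mk_add_mk, e] at this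
  apply this
  rw [mem_RR_l hrp]
  exact ⟨Λl.add_mem (C.l_mem hq h1).1 (C.l_mem (by simpa using hr) h2).1, h4⟩

lemma Cl.rS {Ψ : Set (E n × Y)} (C : Cl n Λs T Λl Ψ) {p : X n} {y z : Y}
    (h1 : (ee p, y) ∈ Ψ) (h2 : (ee p, z) ∈ Ψ) : (ee (ng p), y - (z + z)) ∈ Ψ := by
  have := C.refl _ h2 _ h1
  rw [refl_eq (c := 2) (by rw [pairing_s]; simp)] at this
  rwa [show ee p - (2:ℝ) • ee p = ee (ng p) by rw [ee_ng]; module,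
      show y - (2:ℝ) • z = y - (z + z) by module] at this

lemma Cl.rL {Ψ : Set (E n × Y)} (C : Cl n Λs T Λl Ψ) {p q : X n} {y z : Y} (hq : q ≠ ng p)
    (h1 : (ee p + ee q, y) ∈ Ψ) (h2 : (ee p + ee q, z) ∈ Ψ) :
    (ee (ng p) + ee (ng q), y - (z + z)) ∈ Ψ := by
  have := C.refl _ h2 _ h1
  rw [refl_eq (c := 2) (pairing_rt (Or.inr ⟨p, q, hq, rfl⟩))] at this
  rwa [show ee p + ee q - (2:ℝ) • (ee p + ee q) = ee (ng p) + ee (ng q) by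
      rw [ee_ng, ee_ng]; module,
      show y - (2:ℝ) • z = y - (z + z) by module] at this

lemma Cl.cases {Ψ : Set (E n × Y)} (C : Cl n Λs T Λl Ψ) {x : E n × Y} (h : x ∈ Ψ) :
    (∃ p y, x = (ee p, y)) ∨ ∃ p q y, q ≠ ng p ∧ x = (ee p + ee q, y) := by
  obtain ⟨x1, x2⟩ := x
  rcases C.sub h with ⟨p, h, hp⟩ | ⟨p, q, hq, h, hp⟩ <;> simp only at h hp <;> subst h
  · exact Or.inl ⟨p, x2, rfl⟩
  · exact Or.inr ⟨p, q, x2, hq, rfl⟩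


/-! ### The systems attached to a two-colouring of the indices -/

def FF (I : Set (Fin n)) (P Q : Set Y) (p : X n) : Set Y :=
  {y | (p.1 ∈ I ∧ y ∈ P) ∨ (p.1 ∉ I ∧ y ∈ Q)}

def ML (T : Set Y) (Λl : AddSubgroup Y) (I : Set (Fin n)) (p q : X n) : Set Y :=
  {y | (p.1 ∈ I ↔ q.1 ∈ I) ∧ y ∈ Λl ∧ (p = q → y ∈ T)}

def MM (T : Set Y) (Λl : AddSubgroup Y) (I : Set (Fin n)) (P Q : Set Y) : Set (E n × Y) :=
  mkR (FF I P Q) (ML T Λl I)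

structure PQ (Λs : Set Y) (Λl : AddSubgroup Y) (P Q : Set Y) : Prop where
  ps : ∀ y ∈ P, y ∈ Λs
  qs : ∀ y ∈ Q, y ∈ Λs
  pl : ∀ y ∈ P, ∀ l ∈ Λl, y + l ∈ P
  ql : ∀ y ∈ Q, ∀ l ∈ Λl, y + l ∈ Q
  dj : ∀ y ∈ P, y ∉ Q

lemma FF_s {P Q : Set Y} (h : PQ Λs Λl P Q) {I : Set (Fin n)} {p : X n} {y : Y}
    (hy : y ∈ FF I P Q p) : y ∈ Λs := by
  rcases hy with ⟨-, hy⟩ | ⟨-, hy⟩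
  · exact h.ps _ hy
  · exact h.qs _ hy

lemma FF_l {P Q : Set Y} (h : PQ Λs Λl P Q) {I : Set (Fin n)} {p : X n} {y l : Y}
    (hy : y ∈ FF I P Q p) (hl : l ∈ Λl) : y + l ∈ FF I P Q p := by
  rcases hy with ⟨hp, hy⟩ | ⟨hp, hy⟩
  · exact Or.inl ⟨hp, h.pl _ hy _ hl⟩
  · exact Or.inr ⟨hp, h.ql _ hy _ hl⟩

lemma FF_neg {P Q : Set Y} (D : Dat Λs T Λl) (h : PQ Λs Λl P Q) {I : Set (Fin n)} {p : X n} {y : Y}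
    (hy : y ∈ FF I P Q p) : -y ∈ FF I P Q p := by
  have := FF_l h hy (Λl.neg_mem (D.two _ (FF_s h hy)))
  rwa [show y + -(y + y) = -y by abel] at this

lemma FF_congr {P Q : Set Y} {I : Set (Fin n)} {p q : X n} (h : p.1 ∈ I ↔ q.1 ∈ I) {y : Y}
    (hy : y ∈ FF I P Q p) : y ∈ FF I P Q q := by
  rcases hy with ⟨hp, hy⟩ | ⟨hp, hy⟩
  · exact Or.inl ⟨h.1 hp, hy⟩
  · exact Or.inr ⟨fun k => hp (h.2 k), hy⟩

lemma FF_dj {P Q : Set Y} (h : PQ Λs Λl P Q) {I : Set (Fin n)} {p q : X n} {y : Y}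
    (hy : y ∈ FF I P Q p) (hy' : y ∈ FF I P Q q) : p.1 ∈ I ↔ q.1 ∈ I := by
  rcases hy with ⟨hp, hy⟩ | ⟨hp, hy⟩ <;> rcases hy' with ⟨hq, hy'⟩ | ⟨hq, hy'⟩
  · tauto
  · exact absurd hy' (h.dj _ hy)
  · exact absurd hy (h.dj _ hy')
  · tauto

lemma MM_cr {P Q : Set Y} (D : Dat Λs T Λl) (h : PQ Λs Λl P Q) (I : Set (Fin n)) :
    Cr Λs T Λl (FF I P Q) (ML T Λl I) where
  symm := fun p q y hy => ⟨hy.1.symm, hy.2.1, fun k => hy.2.2 k.symm⟩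
  subS := fun p y hy => FF_s h hy
  subL := fun p q y _ hy => hy.2
  negS := fun p y hy => FF_neg D h hy
  negL := fun p q y _ hy => ⟨hy.1, Λl.neg_mem hy.2.1, fun k => D.tneg (hy.2.2 (ng_inj.1 k))⟩
  rS := by
    intro p y z hy hz
    have := FF_l h hy (Λl.neg_mem (D.two _ (FF_s h hz)))
    rwa [← sub_eq_add_neg] at this
  rL := fun p q y z _ hy hz => ⟨hy.1, Λl.sub_mem hy.2.1 (Λl.add_mem hz.2.1 hz.2.1),
    fun k => D.t2 _ (hy.2.2 (ng_inj.1 k)) _ hz.2.1⟩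
  rD := fun p d y hd hy => ⟨Iff.rfl,
    D.tl _ (D.t2 _ (hd.2.2 rfl) _ (D.two _ (FF_s h hy))),
    fun _ => D.t2 _ (hd.2.2 rfl) _ (D.two _ (FF_s h hy))⟩
  ss := by
    intro p q y z _ hy hz h1 h2
    refine ⟨?_, h1, h2⟩
    have := FF_l h (FF_neg D h hz) h1
    rw [show -z + (y + z) = y by abel] at this
    exact FF_dj h hy this
  ls := by
    intro p q y z _ hy hz
    rw [add_comm]
    exact FF_l h (FF_congr (p := ng q) hy.1.symm hz) hy.2.1
  ll := fun p q r y z _ _ _ hy hz h1 h2 => ⟨hy.1.trans hz.1, h1, h2⟩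

lemma mem_MM_s {P Q : Set Y} {I : Set (Fin n)} {p : X n} {y : Y} :
    (ee p, y) ∈ MM T Λl I P Q ↔ y ∈ FF I P Q p := mem_mk_s

lemma ML_symm {I : Set (Fin n)} (p q : X n) (y : Y) (hy : y ∈ ML T Λl I p q) :
    y ∈ ML T Λl I q p := ⟨hy.1.symm, hy.2.1, fun k => hy.2.2 k.symm⟩

lemma mem_MM_l {P Q : Set Y} {I : Set (Fin n)} {p q : X n} {y : Y} (hq : q ≠ ng p) :
    (ee p + ee q, y) ∈ MM T Λl I P Q ↔ (p.1 ∈ I ↔ q.1 ∈ I) ∧ y ∈ Λl ∧ (p = q → y ∈ T) :=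
  mem_mk_l ML_symm hq

lemma RR_eq : RR n Λs T Λl = MM T Λl Set.univ Λs ∅ := by
  ext x; simp [RR, MM, mkR, FF, ML, KK]

lemma RR_cl (D : Dat Λs T Λl) : Cl n Λs T Λl (RR n Λs T Λl) := by
  have h : PQ Λs Λl Λs ∅ := ⟨fun _ h => h, by simp, D.add, by simp, by simp⟩
  have C := MM_cr (n := n) D h Set.univ
  refine ⟨subset_rfl, ?_, ?_, fun _ _ _ _ h => h⟩
  · intro x hx; rw [RR_eq] at hx ⊢; exact C.neg hx
  · rw [RR_eq]; exact C.refl D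

lemma RR_empty_sub : RR n Λs ∅ Λl ⊆ RR n Λs T Λl := by
  rintro x (⟨p, h, hp⟩ | ⟨p, q, hq, h, hp⟩)
  · exact Or.inl ⟨p, h, hp⟩
  · exact Or.inr ⟨p, q, hq, h, hp.1, fun k => (hp.2 k).elim⟩

lemma full {Ψ : Set (E n × Y)} (C : Cl n Λs T Λl Ψ) (h1 : ∀ p, ∀ y ∈ Λs, (ee p, y) ∈ Ψ)
    (h2 : ∀ p q y, q ≠ ng p → y ∈ Λl → (p = q → y ∈ T) → (ee p + ee q, y) ∈ Ψ) :
    Ψ = RR n Λs T Λl := by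
  refine Set.Subset.antisymm C.sub ?_
  rintro ⟨x1, x2⟩ (⟨p, h, hp⟩ | ⟨p, q, hq, h, hp⟩) <;> simp only at h hp <;> subst h
  · exact h1 _ _ hp
  · exact h2 _ _ _ hq hp.1 hp.2

lemma exists_other (hn : 2 ≤ n) (p : X n) : ∃ q : X n, q ≠ p ∧ q ≠ ng p := by
  have : Nontrivial (Fin n) := Fin.nontrivial_iff_two_le.2 hn
  obtain ⟨j, hj⟩ := exists_ne p.1
  refine ⟨(j, true), fun h => hj (by rw [← h]), fun h => hj ?_⟩
  have : p.1 = (ng p).1 := rfl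
  rw [this, ← h]

lemma restrict (D : Dat Λs T Λl) {Ψ : Set (E n × Y)} (C : Cl n Λs T Λl Ψ) :
    Cl n Λs ∅ Λl (Ψ ∩ RR n Λs ∅ Λl) := by
  have B := RR_cl (n := n) D.empty
  refine ⟨Set.inter_subset_right, ?_, ?_, ?_⟩
  · exact fun x hx => ⟨C.neg _ hx.1, B.neg _ hx.2⟩
  · exact fun a ha x hx => ⟨C.refl _ ha.1 _ hx.1, B.refl _ ha.2 _ hx.2⟩
  · exact fun x hx y hy h => ⟨C.add _ hx.1 _ hy.1 (RR_empty_sub h), h⟩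

lemma Cl.closed {Ψ : Set (E n × Y)} (C : Cl n Λs T Λl Ψ) (h1 : Ψ.Nonempty)
    (h2 : Ψ ≠ RR n Λs T Λl) : IsClosedSubSys (RR n Λs T Λl) Ψ :=
  ⟨⟨h1, C.sub, h2, C.refl⟩, C.add⟩

lemma full_of_B (hn : 2 ≤ n) {Ψ : Set (E n × Y)} (C : Cl n Λs T Λl Ψ)
    (h : RR n Λs ∅ Λl ⊆ Ψ) : Ψ = RR n Λs T Λl := by
  refine full C (fun p y hy => h (mem_RR_s.2 hy)) ?_
  intro p q y hq hy hT
  by_cases hpq : p = q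
  · subst hpq
    obtain ⟨r, hr1, hr2⟩ := exists_other hn p
    have a1 : (ee p + ee r, (0:Y)) ∈ Ψ :=
      h ((mem_RR_l hr2).2 ⟨Λl.zero_mem, fun k => absurd k.symm hr1⟩)
    have a2 : (ee (ng r) + ee p, y) ∈ Ψ :=
      h ((mem_RR_l (by simpa using hr1.symm)).2 ⟨hy, fun k => absurd (ng_eq.1 k) hr2⟩)
    have := C.ll a1 a2 hr2 hr1.symm (by simp) (by simpa using hT)
    simpa using this
  · exact h ((mem_RR_l hq).2 ⟨hy, fun k => absurd k hpq⟩)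

lemma lift_max (hn : 2 ≤ n) (D : Dat Λs T Λl) {Ψ : Set (E n × Y)}
    (C : Cl n Λs T Λl Ψ) (hd : ∀ p, ∀ d ∈ T, (ee p + ee p, d) ∈ Ψ)
    (hm : IsMaxClosedSubSys (RR n Λs ∅ Λl) (Ψ ∩ RR n Λs ∅ Λl)) :
    IsMaxClosedSubSys (RR n Λs T Λl) Ψ := by
  have hne := hm.1.1.1
  refine ⟨C.closed hne.left ?_, ?_⟩
  · intro h
    exact hm.1.1.2.2.1 (by rw [h]; exact Set.inter_eq_right.2 RR_empty_sub)
  · intro Ψ1 h1 hsub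
    have C1 := cl_of h1
    have h2 : Ψ1 ∩ RR n Λs ∅ Λl = Ψ ∩ RR n Λs ∅ Λl := by
      refine hm.2 _ ((restrict D C1).closed (hne.mono (Set.inter_subset_inter_left _ hsub)) ?_)
        (Set.inter_subset_inter_left _ hsub)
      intro h
      exact h1.1.2.2.1 (full_of_B hn C1 (Set.inter_eq_right.1 h))
    refine Set.Subset.antisymm ?_ hsub
    intro x hx
    by_cases hB : x ∈ RR n Λs ∅ Λl
    · have : x ∈ Ψ1 ∩ RR n Λs ∅ Λl := ⟨hx, hB⟩
      rw [h2] at this; exact this.1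
    · obtain ⟨x1, x2⟩ := x
      rcases C1.sub hx with ⟨p, h, hp⟩ | ⟨p, q, hq, h, hp⟩ <;> simp only at h hp <;> subst h
      · exact absurd (mem_RR_s.2 hp) hB
      · by_cases hpq : p = q
        · subst hpq; exact hd _ _ (hp.2 rfl)
        · exact absurd ((mem_RR_l hq).2 ⟨hp.1, fun k => absurd k hpq⟩) hB

lemma MM_inter {P Q : Set Y} (h : PQ Λs Λl P Q) (I : Set (Fin n)) :
    MM T Λl I P Q ∩ RR n Λs ∅ Λl = MM ∅ Λl I P Q := by
  ext ⟨x1, x2⟩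
  constructor
  · rintro ⟨hx, hB⟩
    rcases hB with ⟨p, h, hp⟩ | ⟨p, q, hq, h, hp⟩ <;> simp only at h hp <;> subst h
    · exact mem_MM_s.2 (mem_MM_s.1 hx)
    · exact (mem_MM_l hq).2 ⟨((mem_MM_l hq).1 hx).1, hp.1, hp.2⟩
  · rintro (⟨p, h', hp⟩ | ⟨p, q, hq, h', hp⟩) <;> simp only at h' hp <;> subst h'
    · exact ⟨mem_MM_s.2 hp, mem_RR_s.2 (FF_s h hp)⟩
    · exact ⟨(mem_MM_l hq).2 ⟨hp.1, hp.2.1, fun k => (hp.2.2 k).elim⟩, (mem_RR_l hq).2 hp.2⟩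

lemma MM_cl {P Q : Set Y} (D : Dat Λs T Λl) (h : PQ Λs Λl P Q) (I : Set (Fin n)) :
    Cl n Λs T Λl (MM T Λl I P Q) := by
  have C := MM_cr (n := n) D h I
  exact ⟨C.sub, fun x hx => C.neg hx, C.refl D, C.add⟩

lemma fst_ne {I : Set (Fin n)} {p q : X n} (h : ¬ (p.1 ∈ I ↔ q.1 ∈ I)) : q ≠ p ∧ q ≠ ng p := by
  constructor
  · rintro rfl; exact h Iff.rfl
  · rintro rfl; exact h Iff.rfl

/-- maximality in type `B` of the two-coloured systems -/
lemma maxB_a {P Q : Set Y} (D : Dat Λs ∅ Λl) (h : PQ Λs Λl P Q) (hc : ∀ y ∈ Λs, y ∈ P ∨ y ∈ Q)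
    {I : Set (Fin n)} {i0 j0 : Fin n} (hi : i0 ∈ I) (hj : j0 ∉ I) :
    IsMaxClosedSubSys (RR n Λs ∅ Λl) (MM ∅ Λl I P Q) := by
  have opp : ∀ p : X n, ∃ q : X n, ¬ (p.1 ∈ I ↔ q.1 ∈ I) := by
    intro p
    by_cases hp : p.1 ∈ I
    · exact ⟨(j0, true), by simp [hp, hj]⟩
    · exact ⟨(i0, true), by simp [hp, hi]⟩
  have cov : ∀ p q : X n, ¬ (p.1 ∈ I ↔ q.1 ∈ I) → ∀ y ∈ Λs, y ∈ FF I P Q p ∨ y ∈ FF I P Q q := by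
    intro p q hpq y hy
    simp only [FF, Set.mem_ofPred_eq]
    have := hc y hy
    tauto
  refine ⟨(MM_cl D h I).closed ?_ ?_, ?_⟩
  · rcases hc 0 (D.ls _ Λl.zero_mem) with k | k
    · exact ⟨(ee (i0, true), 0), mem_MM_s.2 (Or.inl ⟨hi, k⟩)⟩
    · exact ⟨(ee (j0, true), 0), mem_MM_s.2 (Or.inr ⟨hj, k⟩)⟩
  · intro he
    obtain ⟨q, hq⟩ := opp (i0, true)
    have hq' := fst_ne hq
    have : (ee (i0, true) + ee q, (0 : Y)) ∈ RR n Λs ∅ Λl :=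
      (mem_RR_l hq'.2).2 ⟨Λl.zero_mem, fun k => absurd k.symm hq'.1⟩
    rw [← he] at this
    exact hq ((mem_MM_l hq'.2).1 this).1
  intro Ψ hΨ hsub
  by_contra hne
  have C := cl_of hΨ
  have hS : ∀ p y, y ∈ FF I P Q p → (ee p, y) ∈ Ψ := fun p y hy => hsub (mem_MM_s.2 hy)
  have hL : ∀ p q y, (p.1 ∈ I ↔ q.1 ∈ I) → q ≠ p → q ≠ ng p → y ∈ Λl → (ee p + ee q, y) ∈ Ψ :=
    fun p q y h1 h2 h3 h4 => hsub ((mem_MM_l h3).2 ⟨h1, h4, fun k => absurd k.symm h2⟩)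
  -- a mixed root in `Ψ`
  have mixed : ∃ p q w, ¬ (p.1 ∈ I ↔ q.1 ∈ I) ∧ (ee p + ee q, w) ∈ Ψ := by
    have : ∃ x ∈ Ψ, x ∉ MM ∅ Λl I P Q := by
      by_contra hcon
      push Not at hcon
      exact hne (Set.Subset.antisymm hcon hsub)
    obtain ⟨⟨x1, x2⟩, hx, hxM⟩ := this
    rcases C.sub hx with ⟨p, h', hp⟩ | ⟨p, q, hq, h', hp⟩ <;> simp only at h' hp <;> subst h'
    · obtain ⟨q, hq⟩ := opp p
      have hq' := fst_ne hq
      rw [mem_MM_s] at hxM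
      have hy := (cov _ _ hq _ hp).resolve_left hxM
      refine ⟨p, ng q, x2 + -x2, hq, C.ss (by simpa using hq'.1) hx
        (hS _ _ (FF_neg D h hy)) (by simp) (fun k => absurd (ng_eq.1 k.symm) hq'.2)⟩
    · rw [mem_MM_l hq] at hxM
      exact ⟨p, q, x2, fun k => hxM ⟨k, hp⟩, hx⟩
  have step1 : ∀ p q w f, ¬ (p.1 ∈ I ↔ q.1 ∈ I) → (ee p + ee q, w) ∈ Ψ → f ∈ FF I P Q p →
      ∀ l ∈ Λl, (ee p + ee q, l) ∈ Ψ ∧ (ee p + ee (ng q), l) ∈ Ψ := by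
    intro p q w f hpq hw hf l hl
    obtain ⟨n1, n2⟩ := fst_ne hpq
    have hwl := (C.l_mem n2 hw).1
    have hs : (ee q, w + -f) ∈ Ψ := by
      rw [add_comm] at hw
      exact C.ls D (fun k => n2 (by rw [k]; simp)) hw (hS (ng p) _ (FF_neg D h hf))
    constructor
    · have := C.ss n2 (hS p _ (FF_l h hf (Λl.sub_mem hl hwl))) hs
        (by rw [show f + (l - w) + (w + -f) = l by abel]; exact hl) (fun k => absurd k.symm n1)
      rwa [show f + (l - w) + (w + -f) = l by abel] at this
    · have e : -f + (l + w) + -(w + -f) = l := by abel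
      have := C.ss (by simpa using n1) (hS p _ (FF_l h (FF_neg D h hf) (Λl.add_mem hl hwl)))
        (C.negS hs) (by rw [e]; exact hl) (fun k => absurd (ng_eq.1 k.symm) n2)
      rwa [e] at this
  have ex : ∃ p q : X n, ¬ (p.1 ∈ I ↔ q.1 ∈ I) ∧
      ∀ l ∈ Λl, (ee p + ee q, l) ∈ Ψ ∧ (ee p + ee (ng q), l) ∈ Ψ := by
    obtain ⟨p, q, w, hpq, hw⟩ := mixed
    rcases cov p q hpq 0 (D.ls _ Λl.zero_mem) with k | k
    · exact ⟨p, q, hpq, step1 _ _ _ _ hpq hw k⟩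
    · rw [add_comm] at hw
      have hpq' : ¬ (q.1 ∈ I ↔ p.1 ∈ I) := fun k => hpq k.symm
      exact ⟨q, p, hpq', step1 _ _ _ _ hpq' hw k⟩
  obtain ⟨p, q, hpq, hG⟩ := ex
  obtain ⟨n1, n2⟩ := fst_ne hpq
  have hG' : ∀ l ∈ Λl, (ee (ng p) + ee q, l) ∈ Ψ := by
    intro l hl
    have := C.negL (hG _ (Λl.neg_mem hl)).2
    simpa using this
  -- all roots `r + q`, `r` of the colour of `p`
  have g1 : ∀ r : X n, (r.1 ∈ I ↔ p.1 ∈ I) → ∀ l ∈ Λl, (ee r + ee q, l) ∈ Ψ := by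
    intro r hr l hl
    by_cases r1 : r = p
    · subst r1; exact (hG l hl).1
    by_cases r2 : r = ng p
    · subst r2; exact hG' l hl
    have hrq : ¬ (r.1 ∈ I ↔ q.1 ∈ I) := by tauto
    have := C.ll (p := r) (q := ng p) (r := q) (y := l) (z := 0)
      (hL _ _ _ hr (fun k => r2 k.symm) (by simpa using fun k => r1 k.symm) hl)
      (by simpa using (hG 0 Λl.zero_mem).1) (by simpa using fun k => r1 k.symm) n2
      (fst_ne hrq).2 (fun k => absurd k.symm (fst_ne hrq).1)
    simpa using this
  have g2 : ∀ r s : X n, (r.1 ∈ I ↔ p.1 ∈ I) → (s.1 ∈ I ↔ q.1 ∈ I) → ∀ l ∈ Λl,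
      (ee r + ee s, l) ∈ Ψ := by
    intro r s hr hs l hl
    by_cases r1 : s = q
    · subst r1; exact g1 r hr l hl
    by_cases r2 : s = ng q
    · subst r2
      have := C.negL (g1 (ng r) hr _ (Λl.neg_mem hl))
      simpa using this
    have hrq : ¬ (r.1 ∈ I ↔ q.1 ∈ I) := by tauto
    have hrs : ¬ (r.1 ∈ I ↔ s.1 ∈ I) := by tauto
    have := C.ll (p := r) (q := q) (r := s) (y := l) (z := 0) (g1 r hr l hl)
      (hL _ _ _ hs.symm r2 (by simpa using r1) Λl.zero_mem) (fst_ne hrq).2 r1 (fst_ne hrs).2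
      (fun k => absurd k.symm (fst_ne hrs).1)
    simpa using this
  have g3 : ∀ r s : X n, s ≠ r → s ≠ ng r → ∀ l ∈ Λl, (ee r + ee s, l) ∈ Ψ := by
    intro r s h1 h2 l hl
    by_cases hrs : r.1 ∈ I ↔ s.1 ∈ I
    · exact hL _ _ _ hrs h1 h2 hl
    by_cases hr : r.1 ∈ I ↔ p.1 ∈ I
    · exact g2 r s hr (by tauto) l hl
    · rw [add_comm]; exact g2 s r (by tauto) (by tauto) l hl
  refine hΨ.1.2.2.1 (full C ?_ ?_)
  · intro r y hy
    obtain ⟨s, hs⟩ := opp r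
    rcases cov _ _ hs y hy with k | k
    · exact hS _ _ k
    · obtain ⟨m1, m2⟩ := fst_ne hs
      have := C.ls' D (y := 0) m1 (g3 r (ng s) (fun k => m2 (by rw [← k]; simp))
        (by simpa using m1) 0 Λl.zero_mem) (hS _ _ k)
      simpa using this
  · intro r s y h1 hy h2
    exact g3 r s (fun k => (h2 k.symm).elim) h1 y hy

lemma maxB_b (hn : 2 ≤ n) (D : Dat Λs ∅ Λl) (hsl : ∀ y ∈ Λs, y ∈ Λl) :
    IsMaxClosedSubSys (RR n Λs ∅ Λl) (MM ∅ Λl ∅ Λs ∅) := by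
  have h : PQ Λs Λl Λs ∅ := ⟨fun _ h => h, by simp, D.add, by simp, by simp⟩
  have i0 : Fin n := ⟨0, by omega⟩
  obtain ⟨q0, hq1, hq2⟩ := exists_other hn (i0, true)
  refine ⟨(MM_cl D h ∅).closed ?_ ?_, ?_⟩
  · exact ⟨(ee (i0, true) + ee q0, 0),
      (mem_MM_l hq2).2 ⟨by simp, Λl.zero_mem, fun k => absurd k.symm hq1⟩⟩
  · intro he
    have : (ee (i0, true), (0 : Y)) ∈ RR n Λs ∅ Λl := mem_RR_s.2 (D.ls _ Λl.zero_mem)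
    rw [← he, mem_MM_s] at this
    simp [FF] at this
  intro Ψ hΨ hsub
  by_contra hne
  have C := cl_of hΨ
  have hL : ∀ p q y, q ≠ p → q ≠ ng p → y ∈ Λl → (ee p + ee q, y) ∈ Ψ :=
    fun p q y h2 h3 h4 => hsub ((mem_MM_l h3).2 ⟨by simp, h4, fun k => absurd k.symm h2⟩)
  have ex : ∃ p y, (ee p, y) ∈ Ψ := by
    have : ∃ x ∈ Ψ, x ∉ MM ∅ Λl ∅ Λs ∅ := by
      by_contra hcon
      push Not at hcon
      exact hne (Set.Subset.antisymm hcon hsub)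
    obtain ⟨⟨x1, x2⟩, hx, hxM⟩ := this
    rcases C.sub hx with ⟨p, h', hp⟩ | ⟨p, q, hq, h', hp⟩ <;> simp only at h' hp <;> subst h'
    · exact ⟨_, _, hx⟩
    · exact absurd ((mem_MM_l hq).2 ⟨by simp, hp⟩) hxM
  obtain ⟨p, y, hy⟩ := ex
  have st : ∀ p y, (ee p, y) ∈ Ψ → ∀ r, r ≠ p → r ≠ ng p → ∀ z ∈ Λl, (ee r, z) ∈ Ψ := by
    intro p y hy r h1 h2 z hz
    have := C.ls' D (Ne.symm h1) (hL r (ng p) (z - y) (Ne.symm h2)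
      (by simpa using Ne.symm h1) (Λl.sub_mem hz (hsl _ (C.s_mem hy)))) hy
    simpa using this
  refine hΨ.1.2.2.1 (full C ?_ ?_)
  · intro r z hz
    by_cases hr : r ≠ p ∧ r ≠ ng p
    · exact st p y hy r hr.1 hr.2 z (hsl _ hz)
    · obtain ⟨s, s1, s2⟩ := exists_other hn p
      have := st p y hy s s1 s2 0 Λl.zero_mem
      refine st s 0 this r ?_ ?_ z (hsl _ hz)
      · rintro rfl; exact hr ⟨s1, s2⟩
      · rintro rfl; exact hr ⟨fun k => s2 (by rw [← k]; simp), fun k => s1 (ng_inj.1 k)⟩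
  · intro r s y h1 hy h2
    exact hL r s y (fun k => (h2 k.symm).elim) h1 hy


/-! ### Containment in a two-coloured system -/

lemma contain (D : Dat Λs T Λl) {Ψ : Set (E n × Y)} (C : Cl n Λs T Λl Ψ) {p q : X n} {a b : Y}
    (hqp : q ≠ p) (hqp' : q ≠ ng p) (hp : (ee p, a) ∈ Ψ) (hq : (ee q, b) ∈ Ψ)
    (hno : ∀ y, (ee p + ee q, y) ∉ Ψ) :
    ∃ (I : Set (Fin n)) (P Q : Set Y) (i0 j0 : Fin n), i0 ∈ I ∧ j0 ∉ I ∧ PQ Λs Λl P Q ∧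
      (∀ y ∈ Λs, y ∈ P ∨ y ∈ Q) ∧ P.Nonempty ∧ Q.Nonempty ∧ Ψ ⊆ MM T Λl I P Q := by
  have aa : a + a ∈ Λl := D.two _ (C.s_mem hp)
  have flip1 : ∀ r w, r ≠ p → r ≠ ng p → (ee r + ee (ng p), w) ∈ Ψ →
      (ee r + ee p, w + a + a) ∈ Ψ := by
    intro r w h1 h2 hw
    have h3 := C.ls' D (Ne.symm h1) hw hp
    have h4 := (C.l_mem (by simpa using Ne.symm h1) hw).1
    refine C.ss (fun k => h2 (by rw [k]; simp)) h3 hp ?_ (fun k => absurd k h1)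
    rw [add_assoc]; exact Λl.add_mem h4 aa
  have flip2 : ∀ r w, r ≠ p → r ≠ ng p → (ee r + ee p, w) ∈ Ψ →
      (ee r + ee (ng p), w + -a + -a) ∈ Ψ := by
    intro r w h1 h2 hw
    have h5 : p ≠ ng r := fun k => h2 (by rw [k]; simp)
    have h3 := C.ls D h5 hw (C.negS hp)
    have h4 := (C.l_mem h5 hw).1
    refine C.ss (by simpa using Ne.symm h1) h3 (C.negS hp) ?_ (fun k => absurd k h2)
    rw [add_assoc, ← neg_add]; exact Λl.add_mem h4 (Λl.neg_mem aa)
  set inI : X n → Prop := fun r => r = p ∨ r = ng p ∨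
    (r ≠ p ∧ r ≠ ng p ∧ ∃ w, (ee r + ee (ng p), w) ∈ Ψ) with hI
  have ing : ∀ r, inI r → inI (ng r) := by
    rintro r (h | h | ⟨h1, h2, w, hw⟩)
    · right; left; rw [h]
    · left; rw [h]; simp
    · right; right
      exact ⟨fun k => h2 (ng_eq.1 k), by simpa using h1, _, C.negL (flip1 r w h1 h2 hw)⟩
  have fI : ∀ r : X n, inI r ↔ inI (r.1, true) := by
    rintro ⟨k, b⟩
    cases b
    · exact ⟨fun h => ing _ h, fun h => ing _ h⟩
    · exact Iff.rfl
  have hqI : ¬ inI q := by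
    rintro (h | h | ⟨h1, h2, w, hw⟩)
    · exact hqp h
    · exact hqp' h
    · have := flip1 q w h1 h2 hw
      rw [add_comm (ee q)] at this
      exact hno _ this
  set P : Set Y := {y | y ∈ Λs ∧ ∃ s, (ee p, s) ∈ Ψ ∧ y - s ∈ Λl} with hP
  have f1 : ∀ r y, inI r → (ee r, y) ∈ Ψ → y ∈ P := by
    intro r y hr hy
    refine ⟨C.s_mem hy, ?_⟩
    rcases hr with h | h | ⟨h1, h2, w, hw⟩
    · subst h; exact ⟨y, hy, by simp⟩
    · subst h
      refine ⟨-y, by simpa using C.negS hy, ?_⟩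
      rw [sub_neg_eq_add]; exact D.two _ (C.s_mem hy)
    · have h3 := C.negL hw
      rw [ng_ng, add_comm] at h3
      refine ⟨-w + y, C.ls' D h1 h3 hy, ?_⟩
      have := (C.l_mem (by simpa using Ne.symm h1) hw).1
      rwa [show y - (-w + y) = w by abel]
  have f2 : ∀ r y, ¬ inI r → (ee r, y) ∈ Ψ → y ∉ P := by
    rintro r y hr hy ⟨-, s, hs, hl⟩
    have h1 : r ≠ p := fun k => hr (Or.inl k)
    have h2 : r ≠ ng p := fun k => hr (Or.inr (Or.inl k))
    refine hr (Or.inr (Or.inr ⟨h1, h2, y + -s, ?_⟩))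
    exact C.ss (by simpa using Ne.symm h1) hy (C.negS hs) (by rwa [← sub_eq_add_neg])
      (fun k => absurd k h2)
  have f3 : ∀ r s w, s ≠ ng r → (ee r + ee s, w) ∈ Ψ → inI r → inI s := by
    intro r s w hs hw hr
    by_cases h1 : s = p
    · exact Or.inl h1
    by_cases h2 : s = ng p
    · exact Or.inr (Or.inl h2)
    by_cases h3 : s = r
    · rw [h3]; exact hr
    refine Or.inr (Or.inr ⟨h1, h2, ?_⟩)
    rw [add_comm] at hw
    rcases hr with h | h | ⟨h4, h5, w', hw'⟩
    · subst h; exact ⟨_, flip2 s w h1 h2 hw⟩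
    · subst h; exact ⟨_, hw⟩
    · have h6 := C.negL hw'
      rw [ng_ng] at h6
      have h7 := C.ll hw h6 (fun k => hs (by rw [k]; simp)) (Ne.symm h4)
        (fun k => h2 (by rw [k]; simp)) (fun k => absurd k h1)
      exact ⟨_, flip2 s _ h1 h2 h7⟩
  refine ⟨{k | inI (k, true)}, P, {y | y ∈ Λs ∧ y ∉ P}, p.1, q.1, (fI p).1 (Or.inl rfl),
    fun k => hqI ((fI q).2 k), ⟨fun y hy => hy.1, fun y hy => hy.1, ?_, ?_, fun y hy k => k.2 hy⟩,
    ?_, ⟨a, f1 p a (Or.inl rfl) hp⟩, ⟨b, C.s_mem hq, f2 q b hqI hq⟩, ?_⟩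
  · rintro y ⟨hy, s, hs, hl⟩ l hl'
    refine ⟨D.add _ hy _ hl', s, hs, ?_⟩
    rw [add_sub_right_comm]; exact Λl.add_mem hl hl'
  · rintro y ⟨hy, hyP⟩ l hl'
    refine ⟨D.add _ hy _ hl', ?_⟩
    rintro ⟨-, s, hs, hl⟩
    refine hyP ⟨hy, s, hs, ?_⟩
    have := Λl.sub_mem hl hl'
    rwa [show y + l - s - l = y - s by abel] at this
  · intro y hy
    by_cases h : y ∈ P
    · exact Or.inl h
    · exact Or.inr ⟨hy, h⟩
  · intro x hx
    rcases C.cases hx with ⟨r, y, rfl⟩ | ⟨r, s, y, hs, rfl⟩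
    · rw [mem_MM_s]
      by_cases hr : inI r
      · exact Or.inl ⟨(fI r).1 hr, f1 r y hr hx⟩
      · exact Or.inr ⟨fun k => hr ((fI r).2 k), C.s_mem hx, f2 r y hr hx⟩
    · rw [mem_MM_l hs]
      refine ⟨?_, C.l_mem hs hx⟩
      have e1 := f3 r s y hs hx
      have e2 : inI s → inI r := by
        have hx' := hx
        rw [add_comm] at hx'
        exact f3 s r y (fun k => hs (by rw [k]; simp)) hx'
      exact ⟨fun k => (fI s).1 (e1 ((fI r).2 k)), fun k => (fI r).1 (e2 ((fI s).2 k))⟩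


/-! ### Extending a subsystem of type `B` with full gradient -/

def DD (Ψ : Set (E n × Y)) (p : X n) (d : Y) : Prop := ∃ w, (ee p, w) ∈ Ψ ∧ (ee p, d - w) ∈ Ψ

def EL (T : Set Y) (Ψ : Set (E n × Y)) (p q : X n) : Set Y :=
  {y | (p = q ∧ y ∈ T ∧ DD Ψ p y) ∨ (p ≠ q ∧ (ee p + ee q, y) ∈ Ψ)}

def EX (T : Set Y) (Ψ : Set (E n × Y)) : Set (E n × Y) :=
  mkR (fun p => {y | (ee p, y) ∈ Ψ}) (EL T Ψ)

lemma EL_symm {Ψ : Set (E n × Y)} (p q : X n) (y : Y) (h : y ∈ EL T Ψ p q) : y ∈ EL T Ψ q p := by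
  rcases h with ⟨rfl, h⟩ | ⟨h1, h2⟩
  · exact Or.inl ⟨rfl, h⟩
  · exact Or.inr ⟨Ne.symm h1, by rwa [add_comm]⟩

structure Fg (Ψ : Set (E n × Y)) : Prop where
  s : ∀ p : X n, ∃ y, (ee p, y) ∈ Ψ
  l : ∀ p q : X n, q ≠ p → q ≠ ng p → ∃ y, (ee p + ee q, y) ∈ Ψ

lemma dd1 (D : Dat Λs ∅ Λl) {Ψ : Set (E n × Y)} (C : Cl n Λs ∅ Λl Ψ) (F : Fg Ψ) {p r : X n}
    (h1 : r ≠ p) (h2 : r ≠ ng p) {d : Y} (hd : d ∈ Λl) (h : DD Ψ p d) :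
    ∃ z1 z2, (ee p + ee r, z1) ∈ Ψ ∧ (ee p + ee (ng r), z2) ∈ Ψ ∧ z1 + z2 = d := by
  obtain ⟨w, hw, hw'⟩ := h
  obtain ⟨z, hz⟩ := F.l p r h1 h2
  have a1 := C.negL hz
  rw [add_comm] at a1
  have a2 := C.ls' D (fun k => h2 (by rw [k]; simp)) a1 hw
  have a3 := C.ss (by simpa using h1) hw' a2
    (by rw [show d - w + (-z + w) = d - z by abel]; exact Λl.sub_mem hd (C.l_mem h2 hz).1)
    (fun k => absurd (by rw [k]; simp) h2)
  exact ⟨_, _, hz, a3, by abel⟩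

lemma dd2 (D : Dat Λs ∅ Λl) {Ψ : Set (E n × Y)} (C : Cl n Λs ∅ Λl Ψ) {p r : X n}
    (h1 : r ≠ p) (h2 : r ≠ ng p) {z1 z2 : Y} (hz1 : (ee p + ee r, z1) ∈ Ψ)
    (hz2 : (ee p + ee (ng r), z2) ∈ Ψ) {w : Y} (hw : (ee p, w) ∈ Ψ) :
    (ee p, z1 + z2 - w) ∈ Ψ := by
  rw [add_comm] at hz1
  have a2 := C.ls D (fun k => h2 (by rw [k]; simp)) hz1 (C.negS hw)
  have a3 := C.ls' D h1 hz2 a2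
  rwa [show z2 + (z1 + -w) = z1 + z2 - w by abel] at a3

lemma dd (hn : 2 ≤ n) (D : Dat Λs ∅ Λl) {Ψ : Set (E n × Y)} (C : Cl n Λs ∅ Λl Ψ) (F : Fg Ψ)
    {p : X n} {d : Y} (hd : d ∈ Λl) (h : DD Ψ p d) {w : Y} (hw : (ee p, w) ∈ Ψ) :
    (ee p, d - w) ∈ Ψ := by
  obtain ⟨r, h1, h2⟩ := exists_other hn p
  obtain ⟨z1, z2, a1, a2, rfl⟩ := dd1 D C F h1 h2 hd h
  exact dd2 D C h1 h2 a1 a2 hw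

lemma EX_cr (hn : 2 ≤ n) (D : Dat Λs T Λl) {Ψ : Set (E n × Y)} (C : Cl n Λs ∅ Λl Ψ) (F : Fg Ψ) :
    Cr Λs T Λl (fun p => {y | (ee p, y) ∈ Ψ}) (EL T Ψ) where
  symm := EL_symm
  subS := fun p y hy => C.s_mem hy
  subL := by
    rintro p q y hq (⟨rfl, h⟩ | ⟨h1, h2⟩)
    · exact ⟨D.tl _ h.1, fun _ => h.1⟩
    · exact ⟨(C.l_mem hq h2).1, fun k => absurd k h1⟩
  negS := fun p y hy => C.negS hy
  negL := by
    rintro p q y hq (⟨rfl, h, w, hw, hw'⟩ | ⟨h1, h2⟩)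
    · refine Or.inl ⟨rfl, D.tneg h, -w, C.negS hw, ?_⟩
      have := C.negS hw'
      rwa [show -(y - w) = -y - -w by abel] at this
    · exact Or.inr ⟨by simpa using h1, C.negL h2⟩
  rS := fun p y z hy hz => C.rS hy hz
  rL := by
    rintro p q y z hq (⟨rfl, h, h'⟩ | ⟨h1, h2⟩) (⟨k0, k, k'⟩ | ⟨k1, k2⟩)
    · obtain ⟨u, hu⟩ := F.s p
      refine Or.inl ⟨rfl, D.t2 _ h _ (D.tl _ k), -u, C.negS hu, ?_⟩
      have := dd hn D.empty C F (D.tl _ k) k' (dd hn D.empty C F (D.tl _ h) h'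
        (dd hn D.empty C F (D.tl _ k) k' hu))
      have := C.negS this
      rwa [show -(z - (y - (z - u))) = y - (z + z) - -u by abel] at this
    · exact absurd rfl k1
    · exact absurd k0 h1
    · exact Or.inr ⟨by simpa using h1, C.rL hq h2 k2⟩
  rD := by
    rintro p d y (⟨-, h, h'⟩ | ⟨h1, h2⟩) hy
    · obtain ⟨u, hu⟩ := F.s p
      have r2 : ∀ v, (ee p, v) ∈ Ψ → (ee p, y + y - v) ∈ Ψ := by
        intro v hv
        have := C.negS (C.rS hv hy)
        rwa [ng_ng, neg_sub] at this
      refine Or.inl ⟨rfl, D.t2 _ h _ (D.two _ (C.s_mem hy)), -u, C.negS hu, ?_⟩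
      have := C.negS (r2 _ (dd hn D.empty C F (D.tl _ h) h' (r2 _ hu)))
      rwa [show -(y + y - (d - (y + y - u))) = d - (y + y + (y + y)) - -u by abel] at this
    · exact absurd rfl h1
  ss := by
    intro p q y z hq hy hz h1 h2
    by_cases h : p = q
    · subst h
      exact Or.inl ⟨rfl, h2 rfl, y, hy, by simpa using hz⟩
    · exact Or.inr ⟨h, C.ss hq hy hz h1 (fun k => absurd k h)⟩
  ls := by
    rintro p q y z hq (⟨rfl, h, h'⟩ | ⟨h1, h2⟩) hz
    · have := dd hn D.empty C F (D.tl _ h) h' (by simpa using C.negS hz)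
      simpa using this
    · exact C.ls D.empty hq h2 hz
  ll := by
    rintro p q r y z hq hr hrp (⟨rfl, h, h'⟩ | ⟨h1, h2⟩) (⟨rfl, k, k'⟩ | ⟨k1, k2⟩) hl hT
    · exact absurd rfl hrp
    · obtain ⟨u, hu⟩ := F.s p
      have a1 := dd hn D.empty C F (D.tl _ h) h' hu
      rw [add_comm] at k2
      have a2 := C.ls' D.empty (Ne.symm hr) k2 hu
      have e : y - u + (z + u) = y + z := by abel
      have a3 := C.ss hrp a1 a2 (by rwa [e]) (fun k => absurd k.symm hr)
      rw [e] at a3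
      exact Or.inr ⟨Ne.symm hr, a3⟩
    · obtain ⟨u, hu⟩ := F.s (ng q)
      have a1 := dd hn D.empty C F (D.tl _ k) k' hu
      have a2 := C.ls D.empty hq h2 hu
      have hpq : p ≠ ng q := fun k => hq (by rw [k]; simp)
      have e : y + u + (z - u) = y + z := by abel
      have a3 := C.ss hrp a2 a1 (by rwa [e]) (fun k => absurd k hpq)
      rw [e] at a3
      exact Or.inr ⟨hpq, a3⟩
    · by_cases h3 : p = r
      · subst h3
        obtain ⟨u, hu⟩ := F.s p
        rw [add_comm] at k2
        exact Or.inl ⟨rfl, hT rfl, u, hu, dd2 D.empty C (Ne.symm h1) hq h2 k2 hu⟩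
      · exact Or.inr ⟨h3, C.ll h2 k2 hq hr hrp (fun k => absurd k h3)⟩

lemma EX_cl (hn : 2 ≤ n) (D : Dat Λs T Λl) {Ψ : Set (E n × Y)} (C : Cl n Λs ∅ Λl Ψ) (F : Fg Ψ) :
    Cl n Λs T Λl (EX T Ψ) := by
  have C := EX_cr hn D C F
  exact ⟨C.sub, fun x hx => C.neg hx, C.refl D, C.add⟩

lemma mem_EX_s {Ψ : Set (E n × Y)} {p : X n} {y : Y} : (ee p, y) ∈ EX T Ψ ↔ (ee p, y) ∈ Ψ :=
  mem_mk_s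

lemma mem_EX_l {Ψ : Set (E n × Y)} {p q : X n} {y : Y} (hq : q ≠ ng p) :
    (ee p + ee q, y) ∈ EX T Ψ ↔ (p = q ∧ y ∈ T ∧ DD Ψ p y) ∨ (p ≠ q ∧ (ee p + ee q, y) ∈ Ψ) :=
  mem_mk_l EL_symm hq

lemma sub_EX {Ψ : Set (E n × Y)} (C : Cl n Λs ∅ Λl Ψ) : Ψ ⊆ EX T Ψ := by
  intro x hx
  rcases C.cases hx with ⟨r, y, rfl⟩ | ⟨r, s, y, hs, rfl⟩
  · exact mem_EX_s.2 hx
  · exact (mem_EX_l hs).2 (Or.inr ⟨fun k => ((C.l_mem hs hx).2 k).elim, hx⟩)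

lemma EX_inter {Ψ : Set (E n × Y)} (C : Cl n Λs ∅ Λl Ψ) : EX T Ψ ∩ RR n Λs ∅ Λl = Ψ := by
  refine Set.Subset.antisymm ?_ (fun x hx => ⟨sub_EX C hx, C.sub hx⟩)
  rintro ⟨x1, x2⟩ ⟨hx, hB⟩
  rcases hB with ⟨p, h, hp⟩ | ⟨p, q, hq, h, hp⟩ <;> simp only at h hp <;> subst h
  · exact mem_EX_s.1 hx
  · rcases (mem_EX_l hq).1 hx with h | h
    · exact (hp.2 h.1).elim
    · exact h.2

lemma le_EX (D : Dat Λs T Λl) {Ψ Ψ1 : Set (E n × Y)} (C1 : Cl n Λs T Λl Ψ1)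
    (h : Ψ1 ∩ RR n Λs ∅ Λl ⊆ Ψ) (hf : ∀ p : X n, ∃ y, (ee p, y) ∈ Ψ1) : Ψ1 ⊆ EX T Ψ := by
  have hS : ∀ p y, (ee p, y) ∈ Ψ1 → (ee p, y) ∈ Ψ :=
    fun p y hy => h ⟨hy, mem_RR_s.2 (C1.s_mem hy)⟩
  intro x hx
  rcases C1.cases hx with ⟨r, y, rfl⟩ | ⟨r, s, y, hs, rfl⟩
  · exact mem_EX_s.2 (hS _ _ hx)
  · rw [mem_EX_l hs]
    have hm := C1.l_mem hs hx
    by_cases hrs : r = s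
    · subst hrs
      obtain ⟨u, hu⟩ := hf r
      refine Or.inl ⟨rfl, hm.2 rfl, u, hS _ _ hu, ?_⟩
      rw [sub_eq_add_neg]
      exact hS _ _ (C1.ls D hs hx (C1.negS hu))
    · exact Or.inr ⟨hrs, h ⟨hx, (mem_RR_l hs).2 ⟨hm.1, fun k => absurd k hrs⟩⟩⟩

lemma EX_closed (hn : 2 ≤ n) (D : Dat Λs T Λl) {Ψ : Set (E n × Y)}
    (hc : IsClosedSubSys (RR n Λs ∅ Λl) Ψ) (F : Fg Ψ) :
    IsClosedSubSys (RR n Λs T Λl) (EX T Ψ) := by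
  have C := cl_of hc
  refine (EX_cl hn D C F).closed (hc.1.1.mono (sub_EX C)) ?_
  intro h
  refine hc.1.2.2.1 ?_
  rw [← EX_inter (T := T) C, h]
  exact Set.inter_eq_right.2 RR_empty_sub

lemma EX_max (hn : 2 ≤ n) (D : Dat Λs T Λl) {Ψ : Set (E n × Y)}
    (hm : IsMaxClosedSubSys (RR n Λs ∅ Λl) Ψ) (F : Fg Ψ) :
    IsMaxClosedSubSys (RR n Λs T Λl) (EX T Ψ) := by
  have C := cl_of hm.1
  refine ⟨EX_closed hn D hm.1 F, ?_⟩
  intro Ψ1 h1 hsub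
  have C1 := cl_of h1
  have hs : Ψ ⊆ Ψ1 ∩ RR n Λs ∅ Λl := fun x hx => ⟨hsub (sub_EX C hx), C.sub hx⟩
  have h2 : Ψ1 ∩ RR n Λs ∅ Λl = Ψ := by
    refine hm.2 _ ((restrict D C1).closed (hm.1.1.1.mono hs) ?_) hs
    intro h
    exact h1.1.2.2.1 (full_of_B hn C1 (Set.inter_eq_right.1 h))
  refine Set.Subset.antisymm (le_EX D C1 h2.le ?_) hsub
  intro p
  obtain ⟨y, hy⟩ := F.s p
  exact ⟨y, (hs hy).1⟩

lemma Fg.mono {Ψ Ψ1 : Set (E n × Y)} (F : Fg Ψ) (h : Ψ ⊆ Ψ1) : Fg Ψ1 :=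
  ⟨fun p => (F.s p).imp fun _ hy => h hy, fun p q h1 h2 => (F.l p q h1 h2).imp fun _ hy => h hy⟩

lemma max_EX (hn : 2 ≤ n) (D : Dat Λs T Λl) {Ψ : Set (E n × Y)}
    (hm : IsMaxClosedSubSys (RR n Λs T Λl) Ψ) (F : Fg (Ψ ∩ RR n Λs ∅ Λl)) :
    IsMaxClosedSubSys (RR n Λs ∅ Λl) (Ψ ∩ RR n Λs ∅ Λl) ∧ Ψ = EX T (Ψ ∩ RR n Λs ∅ Λl) := by
  have C := cl_of hm.1
  have hf : ∀ p : X n, ∃ y, (ee p, y) ∈ Ψ := fun p => (F.s p).imp fun _ hy => hy.1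
  have hcl : IsClosedSubSys (RR n Λs ∅ Λl) (Ψ ∩ RR n Λs ∅ Λl) := by
    refine (restrict D C).closed ?_ ?_
    · obtain ⟨y, hy⟩ := F.s (⟨0, by omega⟩, true)
      exact ⟨_, hy⟩
    · intro h
      exact hm.1.1.2.2.1 (full_of_B hn C (Set.inter_eq_right.1 h))
  refine ⟨⟨hcl, ?_⟩, (hm.2 _ (EX_closed hn D hcl F) (le_EX D C subset_rfl hf)).symm⟩
  intro Ψ1 h1 hsub
  have := hm.2 _ (EX_closed hn D h1 (F.mono hsub)) (le_EX D C hsub hf)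
  rw [← this, EX_inter (cl_of h1)]


/-! ### Bridge with the definitions of the statement -/

lemma mem_short {v : E n} : v ∈ shortBC n ↔ ∃ p : X n, v = ee p := by
  constructor
  · rintro ⟨i, h | h⟩
    · exact ⟨(i, true), by simp [ee, h]⟩
    · exact ⟨(i, false), by simp [ee, h]⟩
  · rintro ⟨⟨i, b⟩, rfl⟩
    cases b
    · exact ⟨i, Or.inr (by simp [ee])⟩
    · exact ⟨i, Or.inl (by simp [ee])⟩

lemma mem_div {v : E n} : v ∈ divBC n ↔ ∃ p : X n, v = ee p + ee p := by
  constructor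
  · rintro ⟨i, h | h⟩
    · exact ⟨(i, true), by simp [ee, h, two_smul]⟩
    · exact ⟨(i, false), by simp [ee, h, two_smul]⟩
  · rintro ⟨⟨i, b⟩, rfl⟩
    cases b
    · exact ⟨i, Or.inr (by simp [ee, two_smul])⟩
    · exact ⟨i, Or.inl (by simp [ee, two_smul])⟩

lemma sgn_ex {c : ℝ} (hc : c = 1 ∨ c = -1) (i : Fin n) :
    ∃ p : X n, p.1 = i ∧ c • eps i = ee p := by
  rcases hc with rfl | rfl
  · exact ⟨(i, true), rfl, by simp [ee]⟩
  · exact ⟨(i, false), rfl, by simp [ee]⟩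

lemma sgn_ex' (p : X n) : ∃ c : ℝ, (c = 1 ∨ c = -1) ∧ ee p = c • eps p.1 := by
  rcases p with ⟨i, b⟩
  cases b
  · exact ⟨-1, Or.inr rfl, by simp [ee]⟩
  · exact ⟨1, Or.inl rfl, by simp [ee]⟩

lemma fst_ne_iff {p q : X n} : p.1 ≠ q.1 ↔ q ≠ p ∧ q ≠ ng p := by
  rw [ne_comm, Ne, fst_eq]; tauto

lemma mem_long_gen {v : E n} (R : Fin n → Fin n → Prop) :
    (∃ i j : Fin n, i ≠ j ∧ R i j ∧ ∃ c d : ℝ, (c = 1 ∨ c = -1) ∧ (d = 1 ∨ d = -1) ∧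
      v = c • eps i + d • eps j) ↔
    ∃ p q : X n, q ≠ p ∧ q ≠ ng p ∧ R p.1 q.1 ∧ v = ee p + ee q := by
  constructor
  · rintro ⟨i, j, hij, hR, c, d, hc, hd, rfl⟩
    obtain ⟨p, rfl, hp⟩ := sgn_ex hc i
    obtain ⟨q, rfl, hq⟩ := sgn_ex hd j
    obtain ⟨h1, h2⟩ := fst_ne_iff.1 hij
    exact ⟨p, q, h1, h2, hR, by rw [hp, hq]⟩
  · rintro ⟨p, q, h1, h2, hR, rfl⟩
    obtain ⟨c, hc, hp⟩ := sgn_ex' p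
    obtain ⟨d, hd, hq⟩ := sgn_ex' q
    exact ⟨p.1, q.1, fst_ne_iff.2 ⟨h1, h2⟩, hR, c, d, hc, hd, by rw [hp, hq]⟩

lemma mem_long {v : E n} :
    v ∈ longBC n ↔ ∃ p q : X n, q ≠ p ∧ q ≠ ng p ∧ v = ee p + ee q := by
  have := mem_long_gen (v := v) (fun _ _ => True)
  simpa [longBC] using this

lemma mem_AJ {v : E n} {J : Set (Fin n)} :
    v ∈ AJ n J ↔ (∃ p : X n, v = ee p + ee p) ∨ (∃ p : X n, p.1 ∈ J ∧ v = ee p) ∨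
      ∃ p q : X n, q ≠ p ∧ q ≠ ng p ∧ (p.1 ∈ J ↔ q.1 ∈ J) ∧ v = ee p + ee q := by
  have h1 := mem_long_gen (v := v) (fun i j => (i ∈ J ∧ j ∈ J) ∨ (i ∉ J ∧ j ∉ J))
  have h2 : (∃ j ∈ J, v = eps j ∨ v = -eps j) ↔ ∃ p : X n, p.1 ∈ J ∧ v = ee p := by
    constructor
    · rintro ⟨j, hj, h | h⟩
      · exact ⟨(j, true), hj, by simp [ee, h]⟩
      · exact ⟨(j, false), hj, by simp [ee, h]⟩
    · rintro ⟨⟨j, b⟩, hj, rfl⟩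
      cases b
      · exact ⟨j, hj, Or.inr (by simp [ee])⟩
      · exact ⟨j, hj, Or.inl (by simp [ee])⟩
  have h3 : ∀ a b : Prop, ((a ∧ b) ∨ (¬ a ∧ ¬ b)) ↔ (a ↔ b) := fun a b => by
    by_cases a <;> by_cases b <;> simp_all
  simp only [h3] at h1
  unfold AJ
  simp only [Set.mem_union, Set.mem_ofPred_eq, h3]
  rw [or_assoc, mem_div, h2]
  exact or_congr Iff.rfl (or_congr Iff.rfl h1)

structure Br (n : ℕ) (Λ : E n → Set Y) (Λs T : Set Y) (Λl : AddSubgroup Y) : Prop where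
  s : ∀ p : X n, Λ (ee p) = Λs
  l : ∀ p q : X n, q ≠ p → q ≠ ng p → Λ (ee p + ee q) = Λl
  d : ∀ p : X n, Λ (ee p + ee p) = T

lemma Br.re {Λ : E n → Set Y} (B : Br n Λ Λs T Λl) (D : Dat Λs T Λl) :
    PhiRe (BCn n) Λ = RR n Λs T Λl := by
  ext ⟨x1, x2⟩
  constructor
  · rintro ⟨(h | h) | h, hy⟩
    · obtain ⟨p, h⟩ := mem_short.1 h
      simp only at h hy; subst h
      rw [B.s] at hy; exact mem_RR_s.2 hy
    · obtain ⟨p, q, h1, h2, h⟩ := mem_long.1 h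
      simp only at h hy; subst h
      rw [B.l _ _ h1 h2] at hy
      exact (mem_RR_l h2).2 ⟨hy, fun k => absurd k.symm h1⟩
    · obtain ⟨p, h⟩ := mem_div.1 h
      simp only at h hy; subst h
      rw [B.d] at hy
      exact (mem_RR_l (by simp)).2 ⟨D.tl _ hy, fun _ => hy⟩
  · rintro (⟨p, h, hp⟩ | ⟨p, q, hq, h, hp⟩) <;> simp only at h hp <;> subst h
    · exact ⟨Or.inl (Or.inl (mem_short.2 ⟨p, rfl⟩)), by simpa [B.s] using hp⟩
    · by_cases hpq : q = p
      · subst hpq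
        exact ⟨Or.inr (mem_div.2 ⟨_, rfl⟩), by simpa [B.d] using hp.2 rfl⟩
      · exact ⟨Or.inl (Or.inr (mem_long.2 ⟨_, _, hpq, hq, rfl⟩)),
          by simpa [B.l _ _ hpq hq] using hp.1⟩

lemma Br.reB {Λ : E n → Set Y} (B : Br n Λ Λs T Λl) :
    PhiRe (Bn n) Λ = RR n Λs ∅ Λl := by
  ext ⟨x1, x2⟩
  constructor
  · rintro ⟨h | h, hy⟩
    · obtain ⟨p, h⟩ := mem_short.1 h
      simp only at h hy; subst h
      rw [B.s] at hy; exact mem_RR_s.2 hy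
    · obtain ⟨p, q, h1, h2, h⟩ := mem_long.1 h
      simp only at h hy; subst h
      rw [B.l _ _ h1 h2] at hy
      exact (mem_RR_l h2).2 ⟨hy, fun k => absurd k.symm h1⟩
  · rintro (⟨p, h, hp⟩ | ⟨p, q, hq, h, hp⟩) <;> simp only at h hp <;> subst h
    · exact ⟨Or.inl (mem_short.2 ⟨p, rfl⟩), by simpa [B.s] using hp⟩
    · have hpq : q ≠ p := fun k => hp.2 k.symm
      exact ⟨Or.inr (mem_long.2 ⟨_, _, hpq, hq, rfl⟩), by simpa [B.l _ _ hpq hq] using hp.1⟩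

lemma Br.aj {Λ : E n → Set Y} (B : Br n Λ Λs T Λl) (D : Dat Λs T Λl) (J : Set (Fin n)) :
    {x : E n × Y | x.1 ∈ AJ n J ∧ x.2 ∈ Λ x.1} = MM T Λl J Λs ∅ := by
  ext ⟨x1, x2⟩
  constructor
  · rintro ⟨h, hy⟩
    rcases mem_AJ.1 h with ⟨p, h⟩ | ⟨p, hp, h⟩ | ⟨p, q, h1, h2, h3, h⟩ <;>
      simp only at h hy <;> subst h
    · rw [B.d] at hy
      exact (mem_MM_l (by simp)).2 ⟨Iff.rfl, D.tl _ hy, fun _ => hy⟩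
    · rw [B.s] at hy
      exact mem_MM_s.2 (Or.inl ⟨hp, hy⟩)
    · rw [B.l _ _ h1 h2] at hy
      exact (mem_MM_l h2).2 ⟨h3, hy, fun k => absurd k.symm h1⟩
  · rintro (⟨p, h, hp⟩ | ⟨p, q, hq, h, hp⟩) <;> simp only at h hp <;> subst h
    · rcases hp with ⟨h1, h2⟩ | ⟨-, h2⟩
      · exact ⟨mem_AJ.2 (Or.inr (Or.inl ⟨p, h1, rfl⟩)), by simpa [B.s] using h2⟩
      · exact h2.elim
    · by_cases hpq : q = p
      · subst hpq
        exact ⟨mem_AJ.2 (Or.inl ⟨_, rfl⟩), by simpa [B.d] using hp.2.2 rfl⟩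
      · exact ⟨mem_AJ.2 (Or.inr (Or.inr ⟨_, _, hpq, hq, hp.1, rfl⟩)),
          by simpa [B.l _ _ hpq hq] using hp.2.1⟩

lemma MM_union (D : Dat Λs T Λl) (I : Set (Fin n)) (P Q : Set Y) :
    MM T Λl I P Q = MM ∅ Λl I P Q ∪ {x | x.1 ∈ divBC n ∧ x.2 ∈ T} := by
  ext ⟨x1, x2⟩
  constructor
  · rintro (⟨p, h, hp⟩ | ⟨p, q, hq, h, hp⟩) <;> simp only at h hp <;> subst h
    · exact Or.inl (mem_MM_s.2 hp)
    · by_cases hpq : q = p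
      · subst hpq
        exact Or.inr ⟨mem_div.2 ⟨_, rfl⟩, hp.2.2 rfl⟩
      · exact Or.inl ((mem_MM_l hq).2 ⟨hp.1, hp.2.1, fun k => absurd k.symm hpq⟩)
  · rintro ((⟨p, h, hp⟩ | ⟨p, q, hq, h, hp⟩) | ⟨h, hp⟩)
    · simp only at h hp; subst h; exact mem_MM_s.2 hp
    · simp only at h hp; subst h
      exact (mem_MM_l hq).2 ⟨hp.1, hp.2.1, fun k => (hp.2.2 k).elim⟩
    · obtain ⟨p, h⟩ := mem_div.1 h
      simp only at h hp; subst h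
      exact (mem_MM_l (by simp)).2 ⟨Iff.rfl, D.tl _ hp, fun _ => hp⟩

lemma gr_iff {Ψ : Set (E n × Y)} (C : Cl n Λs ∅ Λl Ψ) : Gr Ψ = Bn n ↔ Fg Ψ := by
  constructor
  · intro h
    refine ⟨fun p => ?_, fun p q h1 h2 => ?_⟩
    · have : ee p ∈ Gr Ψ := by rw [h]; exact Or.inl (mem_short.2 ⟨p, rfl⟩)
      exact this
    · have : ee p + ee q ∈ Gr Ψ := by rw [h]; exact Or.inr (mem_long.2 ⟨p, q, h1, h2, rfl⟩)
      exact this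
  · intro F
    ext v
    constructor
    · rintro ⟨y, hy⟩
      rcases C.sub hy with ⟨p, h, hp⟩ | ⟨p, q, hq, h, hp⟩ <;> simp only at h hp <;> subst h
      · exact Or.inl (mem_short.2 ⟨p, rfl⟩)
      · exact Or.inr (mem_long.2 ⟨p, q, fun k => hp.2 k.symm, hq, rfl⟩)
    · rintro (h | h)
      · obtain ⟨p, rfl⟩ := mem_short.1 h
        exact F.s p
      · obtain ⟨p, q, h1, h2, rfl⟩ := mem_long.1 h
        exact F.l p q h1 h2

lemma next_ne (hn : 2 ≤ n) (i : Fin n) : nextIdx i ≠ i := by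
  intro h
  have h1 := congrArg Fin.val h
  simp only [nextIdx] at h1
  have := i.2
  by_cases h2 : (i : ℕ) + 1 = n
  · rw [h2, Nat.mod_self] at h1; omega
  · rw [Nat.mod_eq_of_lt (by omega)] at h1; omega

lemma dd_iff (D : Dat Λs ∅ Λl) {Ψ : Set (E n × Y)} (C : Cl n Λs ∅ Λl Ψ) (F : Fg Ψ) {p r : X n}
    (h1 : r ≠ p) (h2 : r ≠ ng p) {d : Y} (hd : d ∈ Λl) :
    DD Ψ p d ↔ d ∈ Zset Ψ (ee p + ee (ng r)) + Zset Ψ (ee p + ee r) := by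
  constructor
  · intro h
    obtain ⟨z1, z2, a1, a2, rfl⟩ := dd1 D C F h1 h2 hd h
    exact ⟨z2, a2, z1, a1, add_comm _ _⟩
  · rintro ⟨z2, a2, z1, a1, rfl⟩
    obtain ⟨u, hu⟩ := F.s p
    have := dd2 D C h1 h2 a1 a2 hu
    exact ⟨u, hu, by simpa [add_comm] using this⟩

lemma EX_eq (hn : 2 ≤ n) (D : Dat Λs T Λl) {Ψ' : Set (E n × Y)} (C : Cl n Λs ∅ Λl Ψ')
    (F : Fg Ψ') : EX T Ψ' = Ψ' ∪ ⋃ i : Fin n,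
          ({x | x.1 = (2:ℝ) • eps i ∧
              x.2 ∈ (Zset Ψ' (eps i - eps (nextIdx i)) +
                Zset Ψ' (eps i + eps (nextIdx i))) ∩ T} ∪
           {x | x.1 = -((2:ℝ) • eps i) ∧
              x.2 ∈ (Zset Ψ' (-eps i + eps (nextIdx i)) +
                Zset Ψ' (-eps i - eps (nextIdx i))) ∩ T}) := by
  have key : ∀ i : Fin n, ∀ d ∈ T, (DD Ψ' (i, true) d ↔
      d ∈ Zset Ψ' (eps i - eps (nextIdx i)) + Zset Ψ' (eps i + eps (nextIdx i))) ∧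
      (DD Ψ' (i, false) d ↔
      d ∈ Zset Ψ' (-eps i + eps (nextIdx i)) + Zset Ψ' (-eps i - eps (nextIdx i))) := by
    intro i d hd
    have hne := next_ne hn i
    constructor
    · rw [dd_iff D.empty C F (r := (nextIdx i, true)) (by simp [hne]) (by simp [ng, hne]) (D.tl _ hd)]
      simp [ee, ng, sub_eq_add_neg]
    · rw [dd_iff D.empty C F (r := (nextIdx i, false)) (by simp [hne]) (by simp [ng, hne]) (D.tl _ hd)]
      simp [ee, ng, sub_eq_add_neg]
  have e1 : ∀ i : Fin n, ee (i, true) + ee (i, true) = (2:ℝ) • eps i := by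
    intro i; simp [ee, two_smul]
  have e2 : ∀ i : Fin n, ee (i, false) + ee (i, false) = -((2:ℝ) • eps i) := by
    intro i; simp [ee, two_smul]
  ext ⟨x1, x2⟩
  simp only [Set.mem_union, Set.mem_iUnion, Set.mem_ofPred_eq, Set.mem_inter_iff]
  constructor
  · rintro (⟨p, h, hp⟩ | ⟨p, q, hq, h, hp⟩) <;> simp only at h hp <;> subst h
    · exact Or.inl hp
    · rcases hp with ⟨rfl, hT, hdd⟩ | ⟨-, h⟩
      · right
        obtain ⟨i, b⟩ := p
        refine ⟨i, ?_⟩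
        cases b
        · exact Or.inr ⟨e2 i, ((key i _ hT).2).1 hdd, hT⟩
        · exact Or.inl ⟨e1 i, ((key i _ hT).1).1 hdd, hT⟩
      · exact Or.inl h
  · rintro (h | ⟨i, ⟨rfl, h, hT⟩ | ⟨rfl, h, hT⟩⟩)
    · exact sub_EX C h
    · rw [← e1, mem_EX_l (by simp)]
      exact Or.inl ⟨rfl, hT, ((key i _ hT).1).2 h⟩
    · rw [← e2, mem_EX_l (by simp)]
      exact Or.inl ⟨rfl, hT, ((key i _ hT).2).2 h⟩


/-! ### The main argument -/

lemma refl_fst {a b : E n} {c : ℝ} (h : pairing b a = c) : reflRoot a b = b - c • a := by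
  rw [reflRoot, h]

lemma Dat.of {Λ : E n → Set Y} (hn : 2 ≤ n) (hED : IsExtensionDatum (BCn n) Λ)
    (B : Br n Λ Λs T Λl) (hdl : T ⊆ (Λl : Set Y)) (hls : (Λl : Set Y) ⊆ Λs) : Dat Λs T Λl := by
  have i0 : Fin n := ⟨0, by omega⟩
  set p : X n := (i0, true)
  obtain ⟨q, h1, h2⟩ := exists_other hn p
  have ms : ∀ r : X n, ee r ∈ BCn n := fun r => Or.inl (Or.inl (mem_short.2 ⟨r, rfl⟩))
  have ml : ∀ r s : X n, s ≠ r → s ≠ ng r → ee r + ee s ∈ BCn n :=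
    fun r s h1 h2 => Or.inl (Or.inr (mem_long.2 ⟨r, s, h1, h2, rfl⟩))
  have md : ∀ r : X n, ee r + ee r ∈ BCn n := fun r => Or.inr (mem_div.2 ⟨r, rfl⟩)
  have g := hED.1
  refine ⟨fun y hy => hls hy, ?_, ?_, fun d hd => hdl hd, ?_⟩
  · intro y hy l hl
    have := g _ (ml p q h1 h2) _ (ms p) (-l) (by rw [B.l _ _ h1 h2]; exact Λl.neg_mem hl) y
      (by rw [B.s]; exact hy)
    rw [refl_fst (pairing_l_one h2), pairing_l_one h2,
      show ee p - (1:ℝ) • (ee p + ee q) = ee (ng q) by rw [ee_ng]; module, B.s,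
      show y - (1:ℝ) • -l = y + l by module] at this
    exact this
  · intro y hy
    have e : pairing (ee p + ee q) (ee p) = 2 := by
      rw [pairing_add_left, pairing_s, pairing_s, gg_zero h1 h2]; simp
    have := g _ (ms p) _ (ml p q h1 h2) y (by rw [B.s]; exact hy) 0
      (by rw [B.l _ _ h1 h2]; exact Λl.zero_mem)
    rw [refl_fst e, e,
      show ee p + ee q - (2:ℝ) • ee p = ee (ng p) + ee q by rw [ee_ng]; module,
      B.l _ _ (fun k => h2 k) (by simpa using h1),
      show 0 - (2:ℝ) • y = -(y + y) by module] at this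
    exact neg_mem_iff.1 this
  · intro d hd l hl
    have e : pairing (ee p + ee p) (ee p + ee q) = 2 := by
      rw [pairing_add_left, pairing_l_one h2]; norm_num
    have := g _ (ml p q h1 h2) _ (md p) l (by rw [B.l _ _ h1 h2]; exact hl) d
      (by rw [B.d]; exact hd)
    rw [refl_fst e, e,
      show ee p + ee p - (2:ℝ) • (ee p + ee q) = ee (ng q) + ee (ng q) by rw [ee_ng]; module,
      B.d, show d - (2:ℝ) • l = d - (l + l) by module] at this
    exact this

lemma gr_sub {Ψ : Set (E n × Y)} (C : Cl n Λs ∅ Λl Ψ) : Gr Ψ ⊆ Bn n := by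
  rintro v ⟨y, hy⟩
  rcases C.sub hy with ⟨p, h, hp⟩ | ⟨p, q, hq, h, hp⟩ <;> simp only at h hp <;> subst h
  · exact Or.inl (mem_short.2 ⟨p, rfl⟩)
  · exact Or.inr (mem_long.2 ⟨p, q, fun k => hp.2 k.symm, hq, rfl⟩)

lemma long_ne {p q : X n} (h : ee p + ee q ∈ longBC n) : q ≠ p ∧ q ≠ ng p := by
  obtain ⟨r, s, h1, h2, h3⟩ := mem_long.1 h
  constructor
  · rintro rfl
    rcases sum_inj h2 h3.symm with ⟨rfl, rfl⟩ | ⟨rfl, rfl⟩ <;> exact h1 rfl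
  · rintro rfl
    rw [ee_ng, add_neg_cancel] at h3
    exact not_rt_zero (Or.inr ⟨r, s, h2, h3⟩)

lemma semi {P Q : Set Y} (D : Dat Λs ∅ Λl) (h : PQ Λs Λl P Q) {I : Set (Fin n)} {i0 j0 : Fin n}
    (hi : i0 ∈ I) (hj : j0 ∉ I) (hP : P.Nonempty) (hQ : Q.Nonempty) :
    IsSemiClosedSubRS (Bn n) (shortBC n) (longBC n) ∅ (Gr (MM ∅ Λl I P Q)) := by
  have C := MM_cl (n := n) D h I
  obtain ⟨a, ha⟩ := hP
  obtain ⟨b, hb⟩ := hQ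
  have gs : ∀ p : X n, ee p ∈ Gr (MM ∅ Λl I P Q) := by
    intro p
    by_cases hp : p.1 ∈ I
    · exact ⟨a, mem_MM_s.2 (Or.inl ⟨hp, ha⟩)⟩
    · exact ⟨b, mem_MM_s.2 (Or.inr ⟨hp, hb⟩)⟩
  have hij : ¬ (((i0, true) : X n).1 ∈ I ↔ ((j0, true) : X n).1 ∈ I) := by simp [hi, hj]
  obtain ⟨n1, n2⟩ := fst_ne hij
  refine ⟨⟨⟨_, gs (i0, true)⟩, gr_sub C, ?_⟩, ?_, ?_⟩
  · rintro α ⟨y, hy⟩ β ⟨z, hz⟩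
    exact ⟨_, C.refl _ hy _ hz⟩
  · intro hcl
    obtain ⟨y, hy⟩ := hcl _ (gs (i0, true)) _ (gs (j0, true))
      (Or.inr (mem_long.2 ⟨_, _, n1, n2, rfl⟩))
    exact hij ((mem_MM_l n2).1 hy).1
  · intro α hα β hβ hs hns
    left
    have hlong : α + β ∈ longBC n := by
      rcases hs with hs | hs
      · obtain ⟨p, hp⟩ := mem_short.1 hs
        rw [hp] at hns
        exact absurd (gs p) hns
      · exact hs
    have sl : ∀ p r s : X n, s ≠ ng r → ee r + ee s + ee p ∈ longBC n →
        ee r + ee s + ee p ∈ Gr (MM ∅ Λl I P Q) := by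
      intro p r s hs hl
      obtain ⟨u, v, h1, h2, h3⟩ := mem_long.1 hl
      rcases three_rt hs (Or.inr ⟨u, v, h2, h3⟩) with rfl | rfl
      · rw [show ee r + ee s + ee (ng r) = ee s by rw [ee_ng]; abel]; exact gs _
      · rw [show ee r + ee s + ee (ng s) = ee r by rw [ee_ng]; abel]; exact gs _
    have lz : ∀ v ∈ Gr (MM ∅ Λl I P Q), v ∈ longBC n → (v, (0:Y)) ∈ MM ∅ Λl I P Q := by
      rintro v ⟨y, hy⟩ hv
      obtain ⟨r, s, h1, h2, rfl⟩ := mem_long.1 hv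
      exact (mem_MM_l h2).2 ⟨((mem_MM_l h2).1 hy).1, Λl.zero_mem, fun k => absurd k.symm h1⟩
    rcases gr_sub C hα with h1 | h1 <;> rcases gr_sub C hβ with h2 | h2
    · exact ⟨h1, h2, Or.inl hlong⟩
    · obtain ⟨p, rfl⟩ := mem_short.1 h1
      obtain ⟨r, s, -, hrs, rfl⟩ := mem_long.1 h2
      rw [add_comm] at hns hlong
      exact absurd (sl p r s hrs hlong) hns
    · obtain ⟨p, rfl⟩ := mem_short.1 h2
      obtain ⟨r, s, -, hrs, rfl⟩ := mem_long.1 h1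
      exact absurd (sl p r s hrs hlong) hns
    · refine absurd ⟨0 + 0, C.add _ (lz _ hα h1) _ (lz _ hβ h2) ?_⟩ hns
      obtain ⟨r, s, k1, k2, k3⟩ := mem_long.1 hlong
      rw [Prod.mk_add_mk, k3, mem_RR_l k2]
      exact ⟨by simp, fun k => absurd k.symm k1⟩

lemma PQ_triv (D : Dat Λs T Λl) : PQ Λs Λl Λs ∅ :=
  ⟨fun _ h => h, by simp, D.add, by simp, by simp⟩

lemma MM_div (D : Dat Λs T Λl) {I : Set (Fin n)} {P Q : Set Y} (p : X n) (d : Y) (hd : d ∈ T) :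
    (ee p + ee p, d) ∈ MM T Λl I P Q :=
  (mem_MM_l (by simp)).2 ⟨Iff.rfl, D.tl _ hd, fun _ => hd⟩

lemma back1 (hn : 2 ≤ n) (D : Dat Λs T Λl) {J : Set (Fin n)} (h1 : J ≠ Set.univ)
    (h2 : Λs ≠ (Λl : Set Y) → J ≠ ∅) :
    IsMaxClosedSubSys (RR n Λs T Λl) (MM T Λl J Λs ∅) := by
  refine lift_max hn D (MM_cl D (PQ_triv D) J) (MM_div D) ?_
  rw [MM_inter (PQ_triv D)]
  by_cases hJ : J = ∅
  · subst hJ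
    have : Λs = (Λl : Set Y) := by
      by_contra h
      exact h2 h rfl
    exact maxB_b hn D.empty (fun y hy => by rw [this] at hy; exact hy)
  · obtain ⟨i0, hi⟩ := Set.nonempty_iff_ne_empty.2 hJ
    obtain ⟨j0, hj⟩ := (Set.ne_univ_iff_exists_notMem _).1 h1
    exact maxB_a D.empty (PQ_triv D) (fun y hy => Or.inl hy) hi hj

lemma back2 (hn : 2 ≤ n) (D : Dat Λs T Λl) {Ψ' : Set (E n × Y)}
    (hm : IsMaxClosedSubSys (RR n Λs ∅ Λl) Ψ')
    (hs : IsSemiClosedSubRS (Bn n) (shortBC n) (longBC n) ∅ (Gr Ψ')) :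
    IsMaxClosedSubSys (RR n Λs T Λl) (Ψ' ∪ {x | x.1 ∈ divBC n ∧ x.2 ∈ T}) := by
  have C := cl_of hm.1
  obtain ⟨-, h1, h2⟩ := hs
  push Not at h1
  obtain ⟨α, hα, β, hβ, hr, hnr⟩ := h1
  have hno := hnr
  rcases h2 α hα β hβ hr hnr with ⟨k1, k2, k3⟩ | ⟨-, -, k3⟩
  swap
  · exact k3.elim
  obtain ⟨p, rfl⟩ := mem_short.1 k1
  obtain ⟨q, rfl⟩ := mem_short.1 k2
  have k4 : ee p + ee q ∈ longBC n := k3.resolve_right (fun h => h)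
  obtain ⟨n1, n2⟩ := long_ne k4
  obtain ⟨a, ha⟩ := hα
  obtain ⟨b, hb⟩ := hβ
  obtain ⟨I, P, Q, i0, j0, hi, hj, h, hc, -, -, hsub⟩ :=
    contain D.empty C n1 n2 ha hb (fun y hy => hno ⟨y, hy⟩)
  have he := hm.2 _ (maxB_a D.empty h hc hi hj).1 hsub
  rw [← he, ← MM_union D]
  refine lift_max hn D (MM_cl D h I) (MM_div D) ?_
  rw [MM_inter h]
  exact maxB_a D.empty h hc hi hj

lemma forw (hn : 2 ≤ n) (D : Dat Λs T Λl) {Ψ : Set (E n × Y)}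
    (hm : IsMaxClosedSubSys (RR n Λs T Λl) Ψ) :
    (∃ J : Set (Fin n), J ≠ Set.univ ∧ (Λs ≠ (Λl : Set Y) → J ≠ ∅) ∧ Ψ = MM T Λl J Λs ∅) ∨
    (∃ Ψ' : Set (E n × Y), IsMaxClosedSubSys (RR n Λs ∅ Λl) Ψ' ∧
        IsSemiClosedSubRS (Bn n) (shortBC n) (longBC n) ∅ (Gr Ψ') ∧
        Ψ = Ψ' ∪ {x | x.1 ∈ divBC n ∧ x.2 ∈ T}) ∨
    (∃ Ψ' : Set (E n × Y), IsMaxClosedSubSys (RR n Λs ∅ Λl) Ψ' ∧ Fg Ψ' ∧ Ψ = EX T Ψ') := by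
  have C := cl_of hm.1
  have hne := hm.1.1.1
  by_cases F : Fg (Ψ ∩ RR n Λs ∅ Λl)
  · exact Or.inr (Or.inr ⟨_, (max_EX hn D hm F).1, F, (max_EX hn D hm F).2⟩)
  by_cases hall : ∀ p : X n, ∃ y, (ee p, y) ∈ Ψ
  · right; left
    have : ∃ p q : X n, q ≠ p ∧ q ≠ ng p ∧ ∀ y, (ee p + ee q, y) ∉ Ψ := by
      by_contra hcon
      push Not at hcon
      refine F ⟨fun p => ?_, fun p q h1 h2 => ?_⟩
      · obtain ⟨y, hy⟩ := hall p
        exact ⟨y, hy, mem_RR_s.2 (C.s_mem hy)⟩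
      · obtain ⟨y, hy⟩ := hcon p q h1 h2
        exact ⟨y, hy, (mem_RR_l h2).2 ⟨(C.l_mem h2 hy).1, fun k => absurd k.symm h1⟩⟩
    obtain ⟨p, q, n1, n2, hno⟩ := this
    obtain ⟨a, ha⟩ := hall p
    obtain ⟨b, hb⟩ := hall q
    obtain ⟨I, P, Q, i0, j0, hi, hj, h, hc, hP, hQ, hsub⟩ := contain D C n1 n2 ha hb hno
    have hB := maxB_a D.empty h hc hi hj
    have hmax : IsMaxClosedSubSys (RR n Λs T Λl) (MM T Λl I P Q) := by
      refine lift_max hn D (MM_cl D h I) (MM_div D) ?_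
      rw [MM_inter h]; exact hB
    have he := hm.2 _ hmax.1 hsub
    exact ⟨_, hB, semi D.empty h hi hj hP hQ, by rw [← he, MM_union D]⟩
  · left
    set J : Set (Fin n) := {i | ∃ y, (ee (i, true), y) ∈ Ψ} with hJ
    have hJ1 : ∀ p : X n, (∃ y, (ee p, y) ∈ Ψ) ↔ p.1 ∈ J := by
      rintro ⟨i, b⟩
      cases b
      · constructor
        · rintro ⟨y, hy⟩; exact ⟨-y, C.negS hy⟩
        · rintro ⟨y, hy⟩; exact ⟨-y, C.negS hy⟩
      · exact Iff.rfl
    have hJu : J ≠ Set.univ := by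
      intro h
      refine hall fun p => (hJ1 p).2 ?_
      rw [h]; trivial
    have hl1 : ∀ p q w, q ≠ ng p → (ee p + ee q, w) ∈ Ψ → p.1 ∈ J → q.1 ∈ J := by
      intro p q w hq hw hp
      obtain ⟨y, hy⟩ := (hJ1 p).2 hp
      rw [add_comm] at hw
      exact (hJ1 q).1 ⟨_, C.ls D (fun k => hq (by rw [k]; simp)) hw (C.negS hy)⟩
    have hl2 : ∀ p q w, q ≠ ng p → (ee p + ee q, w) ∈ Ψ → (p.1 ∈ J ↔ q.1 ∈ J) := by
      intro p q w hq hw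
      refine ⟨hl1 p q w hq hw, ?_⟩
      rw [add_comm] at hw
      exact hl1 q p w (fun k => hq (by rw [k]; simp)) hw
    have hsub : Ψ ⊆ MM T Λl J Λs ∅ := by
      intro x hx
      rcases C.cases hx with ⟨r, y, rfl⟩ | ⟨r, s, y, hs, rfl⟩
      · exact mem_MM_s.2 (Or.inl ⟨(hJ1 r).1 ⟨y, hx⟩, C.s_mem hx⟩)
      · exact (mem_MM_l hs).2 ⟨hl2 r s y hs hx, C.l_mem hs hx⟩
    have hc2 : Λs ≠ (Λl : Set Y) → J ≠ ∅ := by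
      intro hsl hJe
      have hPQ : PQ Λs Λl ∅ (Λl : Set Y) :=
        ⟨by simp, D.ls, by simp, fun y hy l hl => Λl.add_mem hy hl, by simp⟩
      have : ∃ y ∈ Λs, y ∉ Λl := by
        by_contra hcon
        push Not at hcon
        exact hsl (Set.Subset.antisymm hcon D.ls)
      obtain ⟨y, hy, hyl⟩ := this
      have hsub' : Ψ ⊆ MM T Λl ∅ ∅ (Λl : Set Y) := by
        intro x hx
        rcases C.cases hx with ⟨r, y, rfl⟩ | ⟨r, s, y, hs, rfl⟩
        · have := (hJ1 r).1 ⟨y, hx⟩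
          rw [hJe] at this; exact this.elim
        · exact (mem_MM_l hs).2 ⟨by simp, C.l_mem hs hx⟩
      have i0 : Fin n := ⟨0, by omega⟩
      have he := hm.2 _ ((MM_cl D hPQ ∅).closed (hne.mono hsub') (by
        intro h
        have h3 : (ee (i0, true), y) ∈ RR n Λs T Λl := mem_RR_s.2 hy
        rw [← h, mem_MM_s] at h3
        rcases h3 with h3 | h3
        · exact h3.2.elim
        · exact hyl h3.2)) hsub'
      have h4 : (ee (i0, true), (0:Y)) ∈ MM T Λl ∅ ∅ (Λl : Set Y) :=
        mem_MM_s.2 (Or.inr ⟨by simp, Λl.zero_mem⟩)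
      rw [he] at h4
      have h5 := (hJ1 (i0, true)).1 ⟨_, h4⟩
      rw [hJe] at h5
      exact h5
    exact ⟨J, hJu, hc2, (hm.2 _ (back1 hn D hJu hc2).1 hsub).symm⟩


end Aux

/-- Theorem 7.1: classification of the maximal closed subroot systems in type
`BC_n`, `n ≥ 2`. -/
theorem statement16 {Y : Type*} [AddCommGroup Y] [Module ℝ Y] [FiniteDimensional ℝ Y]
    {n : ℕ} (hn : 2 ≤ n) (Λ : E n → Set Y) (Λs Λd : Set Y) (Λl : AddSubgroup Y)
    (hED : IsExtensionDatum (BCn n) Λ)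
    (hs : ∀ α ∈ shortBC n, Λ α = Λs) (hl : ∀ α ∈ longBC n, Λ α = (Λl : Set Y))
    (hd : ∀ α ∈ divBC n, Λ α = Λd)
    (hdl : Λd ⊆ (Λl : Set Y)) (hls : (Λl : Set Y) ⊆ Λs)
    (Ψ : Set (E n × Y)) :
    IsMaxClosedSubSys (PhiRe (BCn n) Λ) Ψ ↔
      (∃ J : Set (Fin n), J ≠ Set.univ ∧ (Λs ≠ (Λl : Set Y) → J ≠ ∅) ∧
        Ψ = {x | x.1 ∈ AJ n J ∧ x.2 ∈ Λ x.1}) ∨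
      (∃ Ψ' : Set (E n × Y), IsMaxClosedSubSys (PhiRe (Bn n) Λ) Ψ' ∧
        IsSemiClosedSubRS (Bn n) (shortBC n) (longBC n) ∅ (Gr Ψ') ∧
        Ψ = Ψ' ∪ {x | x.1 ∈ divBC n ∧ x.2 ∈ Λd}) ∨
      (∃ Ψ' : Set (E n × Y), IsMaxClosedSubSys (PhiRe (Bn n) Λ) Ψ' ∧
        Gr Ψ' = Bn n ∧
        Ψ = Ψ' ∪ ⋃ i : Fin n,
          ({x | x.1 = (2:ℝ) • eps i ∧
              x.2 ∈ (Zset Ψ' (eps i - eps (nextIdx i)) +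
                Zset Ψ' (eps i + eps (nextIdx i))) ∩ Λd} ∪
           {x | x.1 = -((2:ℝ) • eps i) ∧
              x.2 ∈ (Zset Ψ' (-eps i + eps (nextIdx i)) +
                Zset Ψ' (-eps i - eps (nextIdx i))) ∩ Λd})) := by
  have B : Br n Λ Λs Λd Λl := ⟨fun p => hs _ (mem_short.2 ⟨p, rfl⟩),
    fun p q h1 h2 => hl _ (mem_long.2 ⟨p, q, h1, h2, rfl⟩), fun p => hd _ (mem_div.2 ⟨p, rfl⟩)⟩
  have D : Dat Λs Λd Λl := Dat.of hn hED B hdl hls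
  rw [B.re D, B.reB]
  constructor
  · intro hm
    rcases forw hn D hm with ⟨J, h1, h2, h3⟩ | h | ⟨Ψ', h1, F, h2⟩
    · exact Or.inl ⟨J, h1, h2, by rw [B.aj D]; exact h3⟩
    · exact Or.inr (Or.inl h)
    · refine Or.inr (Or.inr ⟨Ψ', h1, (gr_iff (cl_of h1.1)).2 F, ?_⟩)
      rw [← EX_eq hn D (cl_of h1.1) F]; exact h2
  · rintro (⟨J, h1, h2, h3⟩ | ⟨Ψ', h1, h2, h3⟩ | ⟨Ψ', h1, h2, h3⟩)
    · rw [h3, B.aj D]; exact back1 hn D h1 h2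
    · rw [h3]; exact back2 hn D h1 h2
    · have F := (gr_iff (cl_of h1.1)).1 h2
      rw [h3, ← EX_eq hn D (cl_of h1.1) F]
      exact EX_max hn D h1 F

end BdS
end
end

section
/- Let q be a prime number and k ≥ 1. The map sending a matrix U to the subgroup of ℤᵏ generated by the rows of U is a bijection from the set 𝐇_q of k×k integer matrices in Hermite normal form with determinant q onto the set 𝐌_q of subgroups of ℤᵏ of index q. In particular, |𝐌_q| = |𝐇_q| = (qᵏ − 1)/(q − 1), and the subgroups of index q are exactly the maximal proper subgroups H of ℤᵏ with ℤᵏ/H of order q. -/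
open scoped RealInnerProductSpace Pointwise

noncomputable section

namespace BdS

variable {V Y : Type*} [NormedAddCommGroup V] [InnerProductSpace ℝ V]
variable [AddCommGroup Y] [Module ℝ Y]

/-- a square integer matrix in Hermite normal form. -/
def IsHNF {k : ℕ} (A : Matrix (Fin k) (Fin k) ℤ) : Prop :=
  (∀ i j : Fin k, j < i → A i j = 0) ∧ (∀ j : Fin k, 0 < A j j) ∧
    ∀ i j : Fin k, i < j → 0 ≤ A i j ∧ A i j < A j j

/-- the subgroup of `ℤᵏ` generated by the rows of `A`. -/
def rowSpan {k : ℕ} (A : Matrix (Fin k) (Fin k) ℤ) : AddSubgroup (Fin k → ℤ) :=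
  AddSubgroup.closure (Set.range fun i => A i)

/-- Parameters of a Hermite normal form of determinant `q`. -/
abbrev Par (k q : ℕ) := Σ m : Fin k, (Fin m.val → Fin q)

def parB {k q : ℕ} (p : Par k q) (i : Fin k) : ℤ :=
  if h : i < p.1 then ((p.2 ⟨i.val, h⟩ : Fin q).val : ℤ) else 0

def parMat {k q : ℕ} (p : Par k q) : Matrix (Fin k) (Fin k) ℤ := fun i j =>
  if i = j then (if j = p.1 then (q : ℤ) else 1) else if j = p.1 then parB p i else 0

def parF {k q : ℕ} (p : Par k q) : (Fin k → ℤ) →+ ℤ where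
  toFun v := v p.1 - ∑ i, parB p i * v i
  map_zero' := by simp
  map_add' v w := by
    simp only [Pi.add_apply, mul_add, Finset.sum_add_distrib]
    ring

def parKer {k q : ℕ} (p : Par k q) : AddSubgroup (Fin k → ℤ) :=
  ((Int.castAddHom (ZMod q)).comp (parF p)).ker

lemma mem_parKer {k q : ℕ} (p : Par k q) (v : Fin k → ℤ) :
    v ∈ parKer p ↔ (q : ℤ) ∣ parF p v := by
  simp [parKer, AddMonoidHom.mem_ker, ZMod.intCast_zmod_eq_zero_iff_dvd]

lemma parB_self {k q : ℕ} (p : Par k q) : parB p p.1 = 0 := by simp [parB]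

lemma parB_of_ge {k q : ℕ} (p : Par k q) {i : Fin k} (h : p.1 ≤ i) : parB p i = 0 := by
  simp [parB, not_lt.mpr h]

lemma parB_nonneg {k q : ℕ} (p : Par k q) (i : Fin k) : 0 ≤ parB p i := by
  unfold parB; split_ifs <;> positivity

lemma parB_lt {k q : ℕ} (hq : 0 < q) (p : Par k q) (i : Fin k) : parB p i < q := by
  unfold parB
  split_ifs with h
  · exact_mod_cast (p.2 ⟨i.val, h⟩).isLt
  · exact_mod_cast hq

lemma parF_single {k q : ℕ} (p : Par k q) (i : Fin k) (c : ℤ) :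
    parF p (Pi.single i c) = (if i = p.1 then c else 0) - parB p i * c := by
  simp [parF, Pi.single_apply, eq_comm]

lemma parKer_index {k q : ℕ} (p : Par k q) : (parKer p).index = q := by
  unfold parKer
  rw [AddSubgroup.index_ker]
  have : ((Int.castAddHom (ZMod q)).comp (parF p)).range = ⊤ := by
    rw [AddMonoidHom.range_eq_top]
    intro x
    obtain ⟨c, rfl⟩ := ZMod.intCast_surjective x
    refine ⟨Pi.single p.1 c, ?_⟩
    simp [parF_single, parB_self]
  rw [this]
  simp

lemma parMat_row {k q : ℕ} (p : Par k q) (i : Fin k) :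
    parMat p i = if i = p.1 then Pi.single p.1 (q : ℤ)
      else Pi.single i 1 + Pi.single p.1 (parB p i) := by
  ext j
  by_cases hi : i = p.1
  · subst hi
    by_cases hj : j = p.1
    · simp [parMat, hj]
    · simp [parMat, hj, Ne.symm hj]
  · by_cases hj : j = p.1
    · simp [parMat, hi, hj, Pi.single_apply, Ne.symm hi]
    · by_cases hij : i = j
      · subst hij; simp [parMat, hi]
      · simp [parMat, hi, hj, hij, Pi.single_apply, Ne.symm hij]

lemma rowSpan_parMat {k q : ℕ} (p : Par k q) : rowSpan (parMat p) = parKer p := by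
  apply le_antisymm
  · unfold rowSpan
    rw [AddSubgroup.closure_le]
    rintro _ ⟨i, rfl⟩
    show parMat p i ∈ parKer p
    rw [mem_parKer, parMat_row]
    split_ifs with h
    · simp [parF_single, parB_self]
    · rw [map_add, parF_single, parF_single, parB_self]
      simp [h]
  · intro v hv
    rw [mem_parKer] at hv
    obtain ⟨t, ht⟩ := hv
    have key : v = ∑ i, (if i = p.1 then t else v i) • parMat p i := by
      ext j
      rw [Finset.sum_apply]
      simp only [Pi.smul_apply, smul_eq_mul]
      by_cases hj : j = p.1
      · subst hj
        have h1 : ∀ i, (if i = p.1 then t else v i) * parMat p i p.1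
            = (if i = p.1 then t * q else 0) + parB p i * v i := by
          intro i
          by_cases hi : i = p.1
          · subst hi; simp [parMat, parB_self]
          · simp [parMat, hi, mul_comm]
        simp only [h1, Finset.sum_add_distrib, Finset.sum_ite_eq', Finset.mem_univ, if_true]
        have : parF p v = v p.1 - ∑ i, parB p i * v i := rfl
        linarith
      · rw [Finset.sum_eq_single j]
        · simp [parMat, hj]
        · intro b _ hb
          simp [parMat, hj, hb]
        · simp
    rw [key]
    refine AddSubgroup.sum_mem _ fun i _ => AddSubgroup.zsmul_mem _ ?_ _
    exact AddSubgroup.subset_closure ⟨i, rfl⟩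

lemma parKer_inj {k q : ℕ} (hq : q.Prime) : Function.Injective (parKer (k := k) (q := q)) := by
  have aux : ∀ p p' : Par k q, parKer p = parKer p' → ¬ p.1 < p'.1 := by
    intro p p' h hlt
    have h1 : (Pi.single p'.1 1 : Fin k → ℤ) ∈ parKer p := by
      rw [mem_parKer, parF_single, parB_of_ge p hlt.le]
      simp [hlt.ne']
    rw [h, mem_parKer, parF_single, parB_self] at h1
    have h2 : (q : ℤ) ∣ 1 := by simpa using h1
    have h3 : q ∣ 1 := by exact_mod_cast h2
    exact hq.one_lt.ne' (Nat.dvd_one.mp h3)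
  intro p p' h
  have hm : p.1 = p'.1 := le_antisymm (not_lt.mp (aux _ _ h.symm)) (not_lt.mp (aux _ _ h))
  obtain ⟨m, a⟩ := p
  obtain ⟨m', a'⟩ := p'
  simp only at hm
  subst hm
  congr 1
  ext ⟨i, hi⟩
  let I : Fin k := ⟨i, hi.trans m.isLt⟩
  have hI : I < m := hi
  have h1 : (Pi.single I 1 + Pi.single m (parB ⟨m, a⟩ I) : Fin k → ℤ) ∈ parKer (⟨m, a⟩ : Par k q) := by
    rw [mem_parKer, map_add, parF_single, parF_single,
      show parB (⟨m, a⟩ : Par k q) m = 0 from parB_self ⟨m, a⟩]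
    simp [hI.ne]
  rw [h, mem_parKer, map_add, parF_single, parF_single,
      show parB (⟨m, a'⟩ : Par k q) m = 0 from parB_self ⟨m, a'⟩] at h1
  simp only [hI.ne, if_false, if_true] at h1
  have e1 : parB (⟨m, a⟩ : Par k q) I = ((a ⟨i, hi⟩).val : ℤ) := by simp [parB, hI, I]
  have e2 : parB (⟨m, a'⟩ : Par k q) I = ((a' ⟨i, hi⟩).val : ℤ) := by simp [parB, hI, I]
  rw [e1, e2] at h1
  have l1 := (a ⟨i, hi⟩).isLt
  have l2 := (a' ⟨i, hi⟩).isLt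
  have h0 := Int.eq_zero_of_abs_lt_dvd h1 (by rw [abs_lt]; constructor <;> omega)
  omega

lemma maximal_of_index {G : Type*} [AddCommGroup G] {q : ℕ} (hq : q.Prime) {H : AddSubgroup G}
    (hH : H.index = q) (K : AddSubgroup G) (hK : H ≤ K) : K = H ∨ K = ⊤ := by
  have h := AddSubgroup.relIndex_mul_index hK
  rw [hH] at h
  have hd : K.index ∣ q := ⟨_, by rw [mul_comm]; exact h.symm⟩
  rcases (Nat.dvd_prime hq).mp hd with h1 | h1
  · right; exact AddSubgroup.index_eq_one.mp h1
  · left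
    rw [h1] at h
    have : H.relIndex K = 1 := Nat.eq_of_mul_eq_mul_right hq.pos (by rw [h, one_mul])
    exact le_antisymm (AddSubgroup.relIndex_eq_one.mp this) hK

lemma exists_par {k q : ℕ} (hq : q.Prime) (H : AddSubgroup (Fin k → ℤ)) (hH : H.index = q) :
    ∃ p : Par k q, parKer p = H := by
  have htop : H ≠ ⊤ := by
    rintro rfl
    rw [AddSubgroup.index_top] at hH
    exact hq.one_lt.ne hH
  have hqm : ∀ v : Fin k → ℤ, (q : ℤ) • v ∈ H := by
    intro v
    have := AddSubgroup.nsmul_index_mem H v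
    rw [hH] at this
    simpa using this
  classical
  let S : Finset (Fin k) := Finset.univ.filter fun i => (Pi.single i 1 : Fin k → ℤ) ∉ H
  have hS : S.Nonempty := by
    by_contra hne
    rw [Finset.not_nonempty_iff_eq_empty] at hne
    apply htop
    rw [eq_top_iff]
    intro v _
    have : v = ∑ i, v i • (Pi.single i 1 : Fin k → ℤ) := by
      ext j; simp [Finset.sum_apply, Pi.single_apply]
    rw [this]
    refine AddSubgroup.sum_mem _ fun i _ => AddSubgroup.zsmul_mem _ ?_ _
    by_contra hi
    have : i ∈ S := by simp [S, hi]
    simp [hne] at this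
  let m := S.max' hS
  have hm : (Pi.single m 1 : Fin k → ℤ) ∉ H := by
    have := S.max'_mem hS
    simpa [S] using this
  have hgt : ∀ i, m < i → (Pi.single i 1 : Fin k → ℤ) ∈ H := by
    intro i hi
    by_contra hn
    have : i ∈ S := by simp [S, hn]
    exact absurd (S.le_max' i this) (not_le.mpr hi)
  have hsup : H ⊔ AddSubgroup.zmultiples (Pi.single m 1 : Fin k → ℤ) = ⊤ := by
    rcases maximal_of_index hq hH _ (le_sup_left (a := H)
      (b := AddSubgroup.zmultiples (Pi.single m 1 : Fin k → ℤ))) with h | h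
    · exfalso
      apply hm
      rw [← h]
      exact AddSubgroup.mem_sup_right (AddSubgroup.mem_zmultiples _)
    · exact h
  have hex : ∀ i : Fin k, ∃ a : Fin q,
      (Pi.single i 1 + Pi.single m ((a.val : ℕ) : ℤ) : Fin k → ℤ) ∈ H := by
    intro i
    have : (Pi.single i 1 : Fin k → ℤ) ∈ H ⊔ AddSubgroup.zmultiples (Pi.single m 1 : Fin k → ℤ) := by
      rw [hsup]; trivial
    obtain ⟨y, hy, z, hz, hyz⟩ := AddSubgroup.mem_sup.mp this
    obtain ⟨c, rfl⟩ := AddSubgroup.mem_zmultiples_iff.mp hz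
    have hq0 : (0 : ℤ) < q := by exact_mod_cast hq.pos
    have r0 := Int.emod_nonneg (-c) hq0.ne'
    have r1 := Int.emod_lt_of_pos (-c) hq0
    refine ⟨⟨((-c) % q).toNat, by omega⟩, ?_⟩
    simp only [Int.toNat_of_nonneg r0]
    have : (Pi.single i 1 + Pi.single m ((-c) % (q : ℤ)) : Fin k → ℤ)
        = y - (q : ℤ) • Pi.single m ((-c) / (q : ℤ)) := by
      rw [← hyz]
      have hd := Int.emod_add_mul_ediv (-c) q
      ext j
      by_cases hj : j = m
      · subst hj
        simp
        linarith
      · simp [hj]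
    rw [this]
    exact H.sub_mem hy (hqm _)
  choose a ha using hex
  let p : Par k q := ⟨m, fun i => a ⟨i.val, i.isLt.trans m.isLt⟩⟩
  refine ⟨p, ?_⟩
  have hle : parKer p ≤ H := by
    rw [← rowSpan_parMat]
    unfold rowSpan
    rw [AddSubgroup.closure_le]
    rintro _ ⟨i, rfl⟩
    show parMat p i ∈ H
    rw [parMat_row]
    split_ifs with h
    · have := hqm (Pi.single m 1)
      rwa [← Pi.single_smul, smul_eq_mul, mul_one] at this
    · rcases lt_or_ge i m with hlt | hge
      · have : parB p i = ((a i).val : ℤ) := by simp [parB, p, hlt]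
        rw [this]
        exact ha i
      · rw [parB_of_ge p hge]
        simpa using hgt i (lt_of_le_of_ne hge (Ne.symm h))
  rcases maximal_of_index hq (parKer_index p) H hle with h | h
  · exact h.symm
  · exact absurd h htop

lemma parMat_hnf {k q : ℕ} (hq : q.Prime) (p : Par k q) :
    IsHNF (parMat p) ∧ (parMat p).det = (q : ℤ) := by
  have hq0 : (0 : ℤ) < q := by exact_mod_cast hq.pos
  have htri : ∀ i j : Fin k, j < i → parMat p i j = 0 := by
    intro i j hij
    simp only [parMat, hij.ne', if_false]
    split_ifs with h
    · exact parB_of_ge p (h ▸ hij.le)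
    · rfl
  refine ⟨⟨htri, ?_, ?_⟩, ?_⟩
  · intro j
    simp only [parMat, if_true]
    split_ifs <;> simp [hq.pos]
  · intro i j hij
    simp only [parMat, hij.ne, if_false, if_true]
    split_ifs
    · exact ⟨parB_nonneg p i, parB_lt hq.pos p i⟩
    · simp
  · rw [Matrix.det_of_upperTriangular (fun i j hij => htri i j hij)]
    simp [parMat]

lemma exists_par_of_hnf {k q : ℕ} (hq : q.Prime) (A : Matrix (Fin k) (Fin k) ℤ) (hA : IsHNF A)
    (hdet : A.det = (q : ℤ)) : ∃ p : Par k q, parMat p = A := by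
  obtain ⟨htri, hpos, hoff⟩ := hA
  rw [Matrix.det_of_upperTriangular (fun i j hij => htri i j hij)] at hdet
  have hqp : Prime (q : ℤ) := Nat.prime_iff_prime_int.mp hq
  have hq0 : (0 : ℤ) < q := by exact_mod_cast hq.pos
  obtain ⟨m, -, hm⟩ := (Prime.dvd_finset_prod_iff hqp _).mp (dvd_of_eq hdet.symm)
  obtain ⟨c, hc⟩ := hm
  have hsplit := Finset.mul_prod_erase Finset.univ (fun i => A i i) (Finset.mem_univ m)
  rw [hdet] at hsplit
  simp only [hc] at hsplit
  have h1 : c * ∏ i ∈ Finset.univ.erase m, A i i = 1 := by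
    apply mul_left_cancel₀ hq0.ne'
    rw [← mul_assoc, hsplit, mul_one]
  have hc0 : 0 < c := by
    have := hpos m
    rw [hc] at this
    exact pos_of_mul_pos_right this hq0.le
  have hc1 : c = 1 := Int.eq_one_of_mul_eq_one_right hc0.le h1
  have hmm : A m m = q := by rw [hc, hc1, mul_one]
  have hone : ∀ i, i ≠ m → A i i = 1 := by
    intro i hi
    rw [hc1, one_mul] at h1
    have hd : A i i ∣ 1 := h1 ▸ Finset.dvd_prod_of_mem (fun i => A i i) (by simp [hi])
    exact Int.eq_one_of_dvd_one (hpos i).le hd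
  refine ⟨⟨m, fun i => ⟨(A ⟨i.val, i.isLt.trans m.isLt⟩ m).toNat, ?_⟩⟩, ?_⟩
  · have := hoff ⟨i.val, i.isLt.trans m.isLt⟩ m i.isLt
    omega
  · ext i j
    by_cases hij : i = j
    · subst hij
      by_cases hi : i = m
      · subst hi; simp [parMat, hmm]
      · simp [parMat, hi, hone i hi]
    · by_cases hj : j = m
      · subst hj
        simp only [parMat, hij, if_false, if_true]
        rcases lt_or_gt_of_ne hij with h | h
        · simp [parB, h, (hoff i j h).1]
        · rw [parB_of_ge _ h.le, htri i j h]
      · simp only [parMat, hij, hj, if_false]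
        rcases lt_or_gt_of_ne hij with h | h
        · have := hoff i j h
          rw [hone j hj] at this
          omega
        · rw [htri i j h]

lemma card_par {k q : ℕ} (hq : q.Prime) : Nat.card (Par k q) = (q ^ k - 1) / (q - 1) := by
  rw [← Nat.geomSum_eq hq.two_le, Nat.card_eq_fintype_card, Fintype.card_sigma,
    ← Fin.sum_univ_eq_sum_range (fun i => q ^ i)]
  simp

/-- Proposition 8.1: Hermite normal form matrices of determinant `q` are in
bijection with the subgroups of `ℤᵏ` of index `q`; there are `(qᵏ-1)/(q-1)` of
them, and they are exactly the maximal proper subgroups with quotient of order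
`q`. -/
theorem statement18 {k : ℕ} (hk : 1 ≤ k) (q : ℕ) (hq : q.Prime) :
    Set.BijOn rowSpan {A : Matrix (Fin k) (Fin k) ℤ | IsHNF A ∧ A.det = (q : ℤ)}
      {H : AddSubgroup (Fin k → ℤ) | H.index = q} ∧
    Set.ncard {H : AddSubgroup (Fin k → ℤ) | H.index = q} = (q ^ k - 1) / (q - 1) ∧
    Set.ncard {A : Matrix (Fin k) (Fin k) ℤ | IsHNF A ∧ A.det = (q : ℤ)} =
      (q ^ k - 1) / (q - 1) ∧
    ∀ H : AddSubgroup (Fin k → ℤ),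
      H.index = q ↔
        (H ≠ ⊤ ∧ (∀ K : AddSubgroup (Fin k → ℤ), H ≤ K → K = H ∨ K = ⊤) ∧
          Nat.card ((Fin k → ℤ) ⧸ H) = q) := by
  have hset : {A : Matrix (Fin k) (Fin k) ℤ | IsHNF A ∧ A.det = (q : ℤ)}
      = Set.range (parMat (k := k) (q := q)) := by
    ext A
    constructor
    · rintro ⟨h1, h2⟩
      exact exists_par_of_hnf hq A h1 h2
    · rintro ⟨p, rfl⟩
      exact parMat_hnf hq p
  have hset2 : {H : AddSubgroup (Fin k → ℤ) | H.index = q}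
      = Set.range (parKer (k := k) (q := q)) := by
    ext H
    constructor
    · intro h
      exact exists_par hq H h
    · rintro ⟨p, rfl⟩
      exact parKer_index p
  have hinj : Function.Injective (parMat (k := k) (q := q)) := by
    intro p p' h
    apply parKer_inj hq
    rw [← rowSpan_parMat, h, rowSpan_parMat]
  refine ⟨?_, ?_, ?_, ?_⟩
  · rw [hset, hset2]
    refine ⟨?_, ?_, ?_⟩
    · rintro _ ⟨p, rfl⟩
      exact ⟨p, (rowSpan_parMat p).symm⟩
    · rintro _ ⟨p, rfl⟩ _ ⟨p', rfl⟩ h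
      rw [rowSpan_parMat, rowSpan_parMat] at h
      rw [parKer_inj hq h]
    · rintro _ ⟨p, rfl⟩
      exact ⟨parMat p, ⟨p, rfl⟩, rowSpan_parMat p⟩
  · rw [hset2, ← card_par hq, ← Nat.card_coe_set_eq]
    exact Nat.card_range_of_injective (parKer_inj hq)
  · rw [hset, ← card_par hq, ← Nat.card_coe_set_eq]
    exact Nat.card_range_of_injective hinj
  · intro H
    constructor
    · intro hH
      refine ⟨?_, maximal_of_index hq hH, hH⟩
      rintro rfl
      rw [AddSubgroup.index_top] at hH
      exact hq.one_lt.ne hH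
    · rintro ⟨-, -, h⟩
      exact h

end BdS
end
end
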